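/- arXiv:1506.08262 — 3 statements merged into one kernel-verified Lean document; each statement's English description precedes it below -/
import Mathlib

section
/- For n prime, (p₁ⁿ − pₙ)/n equals the sum of F_{Des(c)} over all cyclic permutations c of [n] (i.e., permutations consisting of a single n-cycle). -/
open Classical in
/-- The power sum symmetric function `p_i = x₁^i + x₂^i + ⋯` (variables indexed by `ℕ`),
as a multivariate power series: the coefficient of a monomial `d` is 1 iff `d = x_j^i`. -/
noncomputable def powerSum (i : ℕ) : MvPowerSeries ℕ ℚ :=
  fun d => if ∃ j, d = Finsupp.single j i then 1 else 0

/-- The fundamental quasisymmetric function `F_S` of degree `n` (0-indexed descent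
positions `S ⊆ {0, …, n-2}`): the coefficient of a monomial `d` is the number of weakly
increasing sequences `g : Fin n → ℕ`, strictly increasing from position `i` to `i+1`
for `i ∈ S`, whose content is `d`. -/
noncomputable def funF (n : ℕ) (S : Set ℕ) : MvPowerSeries ℕ ℚ :=
  fun d => (Nat.card {g : Fin n → ℕ //
    (∀ i : ℕ, ∀ h : i + 1 < n,
      g ⟨i, Nat.lt_of_succ_lt h⟩ ≤ g ⟨i + 1, h⟩ ∧
      (i ∈ S → g ⟨i, Nat.lt_of_succ_lt h⟩ < g ⟨i + 1, h⟩)) ∧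
    ∀ j : ℕ, d j = Nat.card {t : Fin n // g t = j}} : ℚ)

/-- The (0-indexed) descent set of a map `σ : Fin n → Fin n`:
positions `i` with `σ(i) > σ(i+1)`. -/
def desSet (n : ℕ) (σ : Fin n → Fin n) : Set ℕ :=
  {i | ∃ h : i + 1 < n, σ ⟨i + 1, h⟩ < σ ⟨i, Nat.lt_of_succ_lt h⟩}

/-- `χ ∈ A(π, S)`: the coloring `χ` is weakly increasing along `π⁻¹(0), …, π⁻¹(n-1)`,
strictly from position `i` to `i+1` whenever `i ∈ S`. -/
def inA (n : ℕ) (π : Equiv.Perm (Fin n)) (S : Set ℕ) (χ : Fin n → ℕ) : Prop :=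
  ∀ i : ℕ, ∀ h : i + 1 < n,
    χ (π.symm ⟨i, Nat.lt_of_succ_lt h⟩) ≤ χ (π.symm ⟨i + 1, h⟩) ∧
    (i ∈ S → χ (π.symm ⟨i, Nat.lt_of_succ_lt h⟩) < χ (π.symm ⟨i + 1, h⟩))

/-- content condition -/
def HasCont (n : ℕ) (d : ℕ →₀ ℕ) (w : Fin n → ℕ) : Prop :=
  ∀ j : ℕ, d j = Nat.card {t : Fin n // w t = j}

open Classical in
/-- words of content `d` -/
noncomputable def Wd (n : ℕ) (d : ℕ →₀ ℕ) : Finset (Fin n → ℕ) :=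
  (Fintype.piFinset (fun _ : Fin n => d.support)).filter (HasCont n d)

lemma mem_Wd {n : ℕ} {d : ℕ →₀ ℕ} {w : Fin n → ℕ} : w ∈ Wd n d ↔ HasCont n d w := by
  classical
  unfold Wd
  rw [Finset.mem_filter, Fintype.mem_piFinset]
  refine ⟨fun h => h.2, fun h => ⟨fun t => ?_, h⟩⟩
  rw [Finsupp.mem_support_iff, h (w t)]
  have : Nonempty {s : Fin n // w s = w t} := ⟨⟨t, rfl⟩⟩
  exact Nat.card_pos.ne'

lemma hasCont_iff {n : ℕ} {d : ℕ →₀ ℕ} {w : Fin n → ℕ} :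
    HasCont n d w ↔ ∑ t, Finsupp.single (w t) 1 = d := by
  classical
  unfold HasCont
  rw [Finsupp.ext_iff]
  refine forall_congr' fun j => ?_
  rw [Finsupp.finsetSum_apply, Nat.card_eq_fintype_card, Fintype.card_subtype, Finset.card_filter]
  simp only [Finsupp.single_apply]
  exact eq_comm

lemma hasCont_comp {n : ℕ} {d : ℕ →₀ ℕ} {w : Fin n → ℕ} (e : Equiv.Perm (Fin n)) :
    HasCont n d (w ∘ e) ↔ HasCont n d w := by
  rw [hasCont_iff, hasCont_iff]
  rw [← Equiv.sum_comp e (fun t => Finsupp.single (w t) 1)]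
  rfl

lemma coeff_p1_pow (n : ℕ) (d : ℕ →₀ ℕ) :
    MvPowerSeries.coeff d (powerSum 1 ^ n) = ((Wd n d).card : ℚ) := by
  classical
  have h1 : (powerSum 1 ^ n) = ∏ _i : Fin n, powerSum 1 := by simp
  rw [h1, MvPowerSeries.coeff_prod]
  have h2 : ∀ l : Fin n →₀ (ℕ →₀ ℕ),
      ∏ i : Fin n, MvPowerSeries.coeff (l i) (powerSum 1) =
        if ∀ i, ∃ j, l i = Finsupp.single j 1 then 1 else 0 := by
    intro l
    have : ∀ i, MvPowerSeries.coeff (l i) (powerSum 1) =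
        if ∃ j, l i = Finsupp.single j 1 then (1:ℚ) else 0 := by
      intro i; rfl
    simp only [this]
    rw [Finset.prod_ite_zero]
    simp
  rw [Finset.sum_congr rfl (fun l _ => h2 l), ← Finset.sum_filter, Finset.sum_const, nsmul_one]
  congr 1
  symm
  refine Finset.card_bij
    (fun w _ => Finsupp.equivFunOnFinite.symm (fun i => Finsupp.single (w i) 1)) ?_ ?_ ?_
  · intro w hw
    rw [mem_Wd, hasCont_iff] at hw
    simp [Finset.mem_finsuppAntidiag, hw]
    exact fun i => ⟨_, rfl⟩
  · intro w _ w' _ h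
    have h' := Finsupp.equivFunOnFinite.symm.injective h
    funext i
    have := congrFun h' i
    simpa [Finsupp.single_left_inj] using this
  · intro l hl
    rw [Finset.mem_filter, Finset.mem_finsuppAntidiag] at hl
    obtain ⟨⟨hs, _⟩, hl⟩ := hl
    choose w hw using hl
    refine ⟨w, ?_, ?_⟩
    · rw [mem_Wd, hasCont_iff, ← hs]
      exact Finset.sum_congr rfl fun i _ => (hw i).symm
    · ext1 i
      simp [hw i]

open Classical in
lemma coeff_pn (m : ℕ) (d : ℕ →₀ ℕ) :
    MvPowerSeries.coeff d (powerSum (m+2)) =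
      (((Wd (m+2) d).filter (fun w => ∀ i j, w i = w j)).card : ℚ) := by
  have h0 : MvPowerSeries.coeff d (powerSum (m+2)) =
      if ∃ j, d = Finsupp.single j (m+2) then (1:ℚ) else 0 := by rfl
  rw [h0]
  have key : ∀ w : Fin (m+2) → ℕ, w ∈ (Wd (m+2) d).filter (fun w => ∀ i j, w i = w j) ↔
      (∃ j, w = (fun _ => j) ∧ d = Finsupp.single j (m+2)) := by
    intro w
    rw [Finset.mem_filter, mem_Wd, hasCont_iff]
    constructor
    · rintro ⟨h, hc⟩
      refine ⟨w 0, funext fun i => hc i 0, ?_⟩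
      rw [← h, Finset.sum_congr rfl (fun i _ => by rw [hc i 0])]
      simp
    · rintro ⟨j, rfl, rfl⟩
      simp
  split_ifs with h
  · obtain ⟨j, hj⟩ := h
    have : (Wd (m+2) d).filter (fun w => ∀ i j, w i = w j) = {fun _ => j} := by
      ext w
      rw [key, Finset.mem_singleton]
      constructor
      · rintro ⟨k, rfl, hk⟩
        rw [hj, Finsupp.single_left_inj (by omega)] at hk
        rw [hk]
      · rintro rfl; exact ⟨j, rfl, hj⟩
    rw [this]; simp
  · have : (Wd (m+2) d).filter (fun w => ∀ i j, w i = w j) = ∅ := by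
      apply Finset.eq_empty_of_forall_notMem
      intro w hw
      obtain ⟨j, _, hj⟩ := (key w).1 hw
      exact h ⟨j, hj⟩
    rw [this]; simp

/-- compatibility of `g` with `c` -/
def Comp {n : ℕ} (c g : Fin n → ℕ) : Prop :=
  ∀ i j : Fin n, i < j → g i ≤ g j ∧ (g i = g j → c i < c j)

lemma compat_iff (n : ℕ) (c : Equiv.Perm (Fin n)) (g : Fin n → ℕ) :
    (∀ i : ℕ, ∀ h : i + 1 < n,
      g ⟨i, Nat.lt_of_succ_lt h⟩ ≤ g ⟨i + 1, h⟩ ∧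
      (i ∈ desSet n ⇑c → g ⟨i, Nat.lt_of_succ_lt h⟩ < g ⟨i + 1, h⟩)) ↔
    Comp (fun i => (c i : ℕ)) g := by
  constructor
  · intro H
    have main : ∀ k : ℕ, ∀ a : ℕ, ∀ h : a + (k+1) < n,
        g ⟨a, by omega⟩ ≤ g ⟨a + (k+1), h⟩ ∧ (g ⟨a, by omega⟩ = g ⟨a + (k+1), h⟩ →
          (c ⟨a, by omega⟩ : ℕ) < c ⟨a + (k+1), h⟩) := by
      have step : ∀ a : ℕ, ∀ h : a + 1 < n,
        g ⟨a, by omega⟩ ≤ g ⟨a + 1, h⟩ ∧ (g ⟨a, by omega⟩ = g ⟨a + 1, h⟩ →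
          (c ⟨a, by omega⟩ : ℕ) < c ⟨a + 1, h⟩) := by
        intro a h
        obtain ⟨h1, h2⟩ := H a h
        refine ⟨h1, fun he => ?_⟩
        by_contra hcon
        have hne : c ⟨a, by omega⟩ ≠ c ⟨a+1, h⟩ := by
          intro e
          have := c.injective e
          simp at this
        have : a ∈ desSet n ⇑c := by
          refine ⟨h, ?_⟩
          rw [Fin.lt_def]
          have := Fin.val_ne_of_ne hne
          omega
        exact (h2 this).ne he
      intro k
      induction k with
      | zero => exact step
      | succ k ih =>
        intro a h
        obtain ⟨h1, h2⟩ := ih a (by omega)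
        obtain ⟨h3, h4⟩ := step (a+(k+1)) h
        refine ⟨h1.trans h3, fun he => ?_⟩
        change _ = g ⟨a + (k+1) + 1, h⟩ at he
        exact (h2 (by omega)).trans (h4 (by omega))
    rintro ⟨i, hi⟩ ⟨j, hj⟩ hij
    rw [Fin.mk_lt_mk] at hij
    obtain ⟨k, rfl⟩ := Nat.exists_eq_add_of_lt hij
    exact main k i hj
  · intro H i h
    obtain ⟨h1, h2⟩ := H ⟨i, by omega⟩ ⟨i+1, h⟩ (by simp)
    refine ⟨h1, fun ⟨_, hd⟩ => lt_of_le_of_ne h1 fun he => ?_⟩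
    have := h2 he
    rw [Fin.lt_def] at hd
    exact lt_asymm this hd

open Classical in
lemma coeff_funF (n : ℕ) (d : ℕ →₀ ℕ) (c : Equiv.Perm (Fin n)) :
    MvPowerSeries.coeff d (funF n (desSet n c)) =
      (((Wd n d).filter (Comp (fun i => (c i : ℕ)))).card : ℚ) := by
  have h0 : MvPowerSeries.coeff d (funF n (desSet n c)) =
    (Nat.card {g : Fin n → ℕ //
    (∀ i : ℕ, ∀ h : i + 1 < n,
      g ⟨i, Nat.lt_of_succ_lt h⟩ ≤ g ⟨i + 1, h⟩ ∧
      (i ∈ desSet n c → g ⟨i, Nat.lt_of_succ_lt h⟩ < g ⟨i + 1, h⟩)) ∧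
    ∀ j : ℕ, d j = Nat.card {t : Fin n // g t = j}} : ℚ) := rfl
  rw [h0]
  congr 1
  apply Nat.subtype_card
  intro g
  rw [Finset.mem_filter, mem_Wd, compat_iff]
  exact and_comm

/-- `(π, w)` compatible -/
def Good {m : ℕ} (π : Equiv.Perm (Fin (m+2))) (w : Fin (m+2) → ℕ) : Prop :=
  ∀ a b, π a < π b → w a ≤ w b ∧ (w a = w b → π (a+1) < π (b+1))

lemma val_smul_one {m : ℕ} (x : Fin (m+2)) : (x : ℕ) • (1 : Fin (m+2)) = x := by
  have h : ∀ k : ℕ, ((k • (1 : Fin (m+2)) : Fin (m+2)) : ℕ) = k % (m+2) := by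
    intro k
    induction k with
    | zero => simp
    | succ k ih =>
      rw [succ_nsmul, Fin.val_add, ih]
      simp
  apply Fin.ext
  rw [h, Nat.mod_eq_of_lt x.2]

lemma sum_contra {m : ℕ} (π : Equiv.Perm (Fin (m+2))) (a b : Fin (m+2))
    (h : ∀ k : ℕ, π (a + k • (1 : Fin (m+2))) < π (b + k • (1 : Fin (m+2)))) : False := by
  have h1 : ∀ a, ∑ k : Fin (m+2), (π (a + k) : ℕ) = ∑ k : Fin (m+2), (k : ℕ) := by
    intro a
    exact Equiv.sum_comp ((Equiv.addLeft a).trans π) (fun k : Fin (m+2) => (k : ℕ))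
  have h2 : ∑ k : Fin (m+2), (π (a + k) : ℕ) < ∑ k : Fin (m+2), (π (b + k) : ℕ) := by
    apply Finset.sum_lt_sum_of_nonempty Finset.univ_nonempty
    intro k _
    have := h k
    rwa [val_smul_one, Fin.lt_def] at this
  rw [h1, h1] at h2
  exact lt_irrefl _ h2

lemma good_unique {m : ℕ} {π π' : Equiv.Perm (Fin (m+2))} {w : Fin (m+2) → ℕ}
    (h : Good π w) (h' : Good π' w) : π = π' := by
  have key : ∀ a b, π a < π b → π' a < π' b := by
    intro a b hab
    by_contra hcon
    have hne : a ≠ b := by rintro rfl; exact lt_irrefl _ hab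
    have hba : π' b < π' a := lt_of_le_of_ne (not_lt.1 hcon) (fun e => hne (π'.injective e).symm)
    have : ∀ k : ℕ, π (a + k • (1 : Fin (m+2))) < π (b + k • (1 : Fin (m+2))) ∧
        π' (b + k • (1 : Fin (m+2))) < π' (a + k • (1 : Fin (m+2))) := by
      intro k
      induction k with
      | zero => simpa using ⟨hab, hba⟩
      | succ k ih =>
        have e : w (a + k • (1 : Fin (m+2))) = w (b + k • (1 : Fin (m+2))) := le_antisymm (h _ _ ih.1).1 (h' _ _ ih.2).1
        have := (h _ _ ih.1).2 e
        have := (h' _ _ ih.2).2 e.symm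
        rw [succ_nsmul, ← add_assoc, ← add_assoc]
        tauto
    exact sum_contra π a b fun k => (this k).1
  have mono : StrictMono (π.symm.trans π') := by
    intro i j hij
    apply key
    simpa using hij
  have hid : ∀ i, (π.symm.trans π') i = i := by
    intro i
    have := Subsingleton.elim (mono.orderIsoOfSurjective _ (π.symm.trans π').surjective)
      (OrderIso.refl _)
    exact congrArg (fun f : Fin (m+2) ≃o Fin (m+2) => f i) this
  ext1 a
  have := hid (π a)
  simpa using this.symm

lemma good_nonconst {m : ℕ} {π : Equiv.Perm (Fin (m+2))} {w : Fin (m+2) → ℕ}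
    (h : Good π w) : ¬ ∀ i j, w i = w j := by
  intro hc
  refine sum_contra π (π.symm 0) (π.symm 1) ?_
  intro k
  induction k with
  | zero => simp
  | succ k ih =>
    have := (h _ _ ih).2 (hc _ _)
    rwa [succ_nsmul, ← add_assoc, ← add_assoc]

lemma good_exists {m : ℕ} (hp : (m+2).Prime) (w : Fin (m+2) → ℕ)
    (hw : ¬ ∀ i j, w i = w j) : ∃ π : Equiv.Perm (Fin (m+2)), Good π w := by
  classical
  let key : Fin (m+2) → Lex (ℕ → ℕ) := fun a => toLex (fun k : ℕ => w (a + k • (1 : Fin (m+2))))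
  have kinj : Function.Injective key := by
    intro a b hab
    by_contra hne
    apply hw
    have h1 : ∀ x, w (a + x) = w (b + x) := by
      intro x
      have := congrFun (congrArg ofLex hab) (x : ℕ)
      simpa [key, val_smul_one] using this
    have h2 : ∀ y, w (y + (b - a)) = w y := by
      intro y
      have := h1 (y - a)
      rw [show a + (y - a) = y by abel, show b + (y - a) = y + (b - a) by abel] at this
      exact this.symm
    have h3 : ∀ k : ℕ, ∀ y, w (y + k • (b - a)) = w y := by
      intro k
      induction k with
      | zero => simp
      | succ k ih => intro y; rw [succ_nsmul, ← add_assoc, h2, ih]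
    have : Fact (m+2).Prime := ⟨hp⟩
    have h4 : ∀ z, w z = w 0 := by
      intro z
      have hz : z ∈ AddSubmonoid.multiples (b - a) :=
        mem_multiples_of_prime_card (p := m+2) (by simp) (sub_ne_zero.2 (Ne.symm hne))
      obtain ⟨k, rfl⟩ := hz
      have := h3 k 0
      simpa using this
    intro i j
    rw [h4 i, h4 j]
  let s : Finset (Lex (ℕ → ℕ)) := Finset.univ.image key
  have hs : s.card = m + 2 := by
    rw [Finset.card_image_of_injective _ kinj]; simp
  let e := s.orderIsoOfFin hs
  let f : Fin (m+2) → Fin (m+2) := fun a => e.symm ⟨key a, by simp [s]⟩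
  have hf : ∀ a b, f a < f b ↔ key a < key b := by
    intro a b
    simp only [f, OrderIso.lt_iff_lt, Subtype.mk_lt_mk]
    try rfl
  have finj : Function.Injective f := by
    intro a b hab
    have := e.symm.injective hab
    exact kinj (congrArg Subtype.val this)
  refine ⟨Equiv.ofBijective f (Finite.injective_iff_bijective.1 finj), ?_⟩
  intro a b hab
  simp only [Equiv.ofBijective_apply, hf] at hab ⊢
  obtain ⟨k, hk1, hk2⟩ := hab
  simp only [key] at hk1 hk2
  cases k with
  | zero =>
    have : w a < w b := by simpa using hk2
    exact ⟨this.le, fun h => absurd h this.ne⟩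
  | succ k =>
    have h0 : w a = w b := by simpa using hk1 0 (by omega)
    refine ⟨h0.le, fun _ => ⟨k, ?_, ?_⟩⟩
    · intro j hj
      have := hk1 (j+1) (by omega)
      simp only [key]
      change w (a + (j+1) • (1 : Fin (m+2))) = w (b + (j+1) • (1 : Fin (m+2))) at this
      rw [succ_nsmul', ← add_assoc, ← add_assoc] at this
      exact this
    · simp only [key]
      change w (a + (k+1) • (1 : Fin (m+2))) < w (b + (k+1) • (1 : Fin (m+2))) at hk2
      rw [succ_nsmul', ← add_assoc, ← add_assoc] at hk2
      exact hk2

/-- conjugate of the rotation -/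
def conjRot {m : ℕ} (π : Equiv.Perm (Fin (m+2))) : Equiv.Perm (Fin (m+2)) :=
  π * finRotate (m+2) * π⁻¹

lemma conjRot_apply {m : ℕ} (π : Equiv.Perm (Fin (m+2))) (a : Fin (m+2)) :
    conjRot π (π a) = π (a+1) := by
  simp [conjRot]

lemma good_iff {m : ℕ} (π : Equiv.Perm (Fin (m+2))) (g : Fin (m+2) → ℕ) :
    Comp (fun i => (conjRot π i : ℕ)) g ↔ Good π (g ∘ π) := by
  unfold Comp Good
  constructor
  · intro h a b hab
    have := h _ _ hab
    simpa only [conjRot_apply, Fin.lt_def, Function.comp_apply] using this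
  · intro h i j hij
    obtain ⟨a, rfl⟩ := π.surjective i
    obtain ⟨b, rfl⟩ := π.surjective j
    have := h _ _ hij
    simpa only [conjRot_apply, Fin.lt_def, Function.comp_apply] using this

lemma conjRot_cyc {m : ℕ} (π : Equiv.Perm (Fin (m+2))) :
    (conjRot π).IsCycle ∧ ∀ x, conjRot π x ≠ x := by
  refine ⟨isCycle_finRotate.conj, ?_⟩
  intro x h
  obtain ⟨a, rfl⟩ := π.surjective x
  rw [conjRot_apply] at h
  have := π.injective h
  simp at this

open Classical in
lemma card_fiber {m : ℕ} (c : Equiv.Perm (Fin (m+2))) (h : c.IsCycle ∧ ∀ x, c x ≠ x) :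
    (Finset.univ.filter (fun π => conjRot π = c)).card = m + 2 := by
  have hsupp : c.support = Finset.univ := by
    ext x; simp [h.2 x]
  have hconj : IsConj (finRotate (m+2)) c := by
    refine isCycle_finRotate.isConj h.1 ?_
    rw [hsupp, support_finRotate]
  obtain ⟨p0, hp0⟩ := isConj_iff.1 hconj
  have := Finset.card_bij (s := Finset.univ.filter (fun π => conjRot π = c))
    (t := (Finset.univ : Finset (Fin (m+2)))) (fun π _ => π 0) (fun _ _ => Finset.mem_univ _)
    ?_ ?_
  · rw [this]; simp
  · intro π hπ π' hπ' h0
    simp only [Finset.mem_filter, Finset.mem_univ, true_and] at hπ hπ'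
    have : ∀ k : ℕ, π (k • (1 : Fin (m+2))) = π' (k • (1 : Fin (m+2))) := by
      intro k
      induction k with
      | zero => simpa using h0
      | succ k ih =>
        rw [succ_nsmul, ← conjRot_apply, ← conjRot_apply, hπ, hπ', ih]
    ext1 x
    have := this x
    rwa [val_smul_one] at this
  · intro x _
    obtain ⟨y, rfl⟩ := p0.surjective x
    refine ⟨p0 * Equiv.addRight y, ?_, by simp⟩
    simp only [Finset.mem_filter, Finset.mem_univ, true_and]
    rw [← hp0]
    ext1 z
    obtain ⟨u, rfl⟩ := (p0 * Equiv.addRight y).surjective z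
    rw [conjRot_apply]
    simp [add_right_comm]

open Classical in
lemma main_count {m : ℕ} (hp : (m+2).Prime) (d : ℕ →₀ ℕ) :
    (m+2) * ∑ c : Equiv.Perm (Fin (m+2)), (if c.IsCycle ∧ ∀ x, c x ≠ x then
      ((Wd (m+2) d).filter (Comp (fun i => (c i : ℕ)))).card else 0) =
    ((Wd (m+2) d).filter (fun w => ¬ ∀ i j, w i = w j)).card := by
  have h1 : (m+2) * ∑ c : Equiv.Perm (Fin (m+2)), (if c.IsCycle ∧ ∀ x, c x ≠ x then
      ((Wd (m+2) d).filter (Comp (fun i => (c i : ℕ)))).card else 0) =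
      ∑ π : Equiv.Perm (Fin (m+2)), ((Wd (m+2) d).filter (Good π)).card := by
    rw [Finset.mul_sum, ← Finset.sum_fiberwise (s := Finset.univ) (g := conjRot)
      (f := fun π => ((Wd (m+2) d).filter (Good π)).card)]
    refine Finset.sum_congr rfl fun c _ => ?_
    have h2 : ∀ π ∈ Finset.univ.filter (fun π => conjRot π = c),
        ((Wd (m+2) d).filter (Good π)).card =
          ((Wd (m+2) d).filter (Comp (fun i => (c i : ℕ)))).card := by
      intro π hπ
      simp only [Finset.mem_filter, Finset.mem_univ, true_and] at hπ
      subst hπ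
      symm
      refine Finset.card_bij (fun g _ => g ∘ π) ?_ ?_ ?_
      · intro g hg
        rw [Finset.mem_filter, mem_Wd] at hg ⊢
        exact ⟨(hasCont_comp π).2 hg.1, (good_iff π g).1 hg.2⟩
      · intro g _ g' _ e
        exact π.surjective.injective_comp_right e
      · intro w hw
        rw [Finset.mem_filter, mem_Wd] at hw
        have e : (w ∘ π.symm) ∘ π = w := by ext x; simp
        refine ⟨w ∘ π.symm, ?_, e⟩
        rw [Finset.mem_filter, mem_Wd, good_iff, e]
        exact ⟨(hasCont_comp π.symm).2 hw.1, hw.2⟩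
    rw [Finset.sum_congr rfl h2, Finset.sum_const, smul_eq_mul]
    split_ifs with hc
    · rw [card_fiber c hc]
    · have : Finset.univ.filter (fun π => conjRot π = c) = ∅ := by
        apply Finset.eq_empty_of_forall_notMem
        intro π hπ
        simp only [Finset.mem_filter, Finset.mem_univ, true_and] at hπ
        exact hc (hπ ▸ conjRot_cyc π)
      rw [this]; simp
  rw [h1]
  simp only [Finset.card_filter]
  rw [Finset.sum_comm]
  refine Finset.sum_congr rfl fun w _ => ?_
  rw [← Finset.card_filter]
  by_cases hw : ∀ i j, w i = w j
  · rw [if_neg (not_not.2 hw), Finset.card_eq_zero]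
    apply Finset.eq_empty_of_forall_notMem
    intro p hpp
    simp only [Finset.mem_filter, Finset.mem_univ, true_and] at hpp
    exact good_nonconst hpp hw
  · obtain ⟨π, hπ⟩ := good_exists hp w hw
    rw [if_pos hw, Finset.card_eq_one]
    refine ⟨π, ?_⟩
    ext p
    simp only [Finset.mem_filter, Finset.mem_univ, true_and, Finset.mem_singleton]
    exact ⟨fun h => good_unique h hπ, fun h => h ▸ hπ⟩

open Classical in
/-- For `n` prime, `(p₁ⁿ − pₙ)/n` equals the sum of `F_{Des c}`
over all cyclic permutations `c` of `Fin n` (single `n`-cycles, i.e. cycles with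
full support). -/
theorem powerSum_div_eq_sum_cycles (n : ℕ) [NeZero n] (hn : n.Prime) :
    (n : ℚ)⁻¹ • (powerSum 1 ^ n - powerSum n) =
      ∑ c : Equiv.Perm (Fin n),
        if c.IsCycle ∧ ∀ x, c x ≠ x then funF n (desSet n ⇑c) else 0 := by
  obtain ⟨m, rfl⟩ : ∃ m, n = m + 2 := ⟨n - 2, by have := hn.two_le; omega⟩
  ext d
  rw [map_smul, map_sub, coeff_p1_pow, coeff_pn, map_sum, smul_eq_mul]
  have h1 : ∀ c : Equiv.Perm (Fin (m+2)), MvPowerSeries.coeff d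
      (if c.IsCycle ∧ ∀ x, c x ≠ x then funF (m+2) (desSet (m+2) ⇑c) else 0) =
      (((if c.IsCycle ∧ ∀ x, c x ≠ x then
      ((Wd (m+2) d).filter (Comp (fun i => (c i : ℕ)))).card else 0) : ℕ) : ℚ) := by
    intro c
    split_ifs
    · exact coeff_funF _ _ _
    · simp
  rw [Finset.sum_congr rfl fun c _ => h1 c, ← Nat.cast_sum]
  have h2 := main_count hn d
  have h3 := Finset.card_filter_add_card_filter_not (s := Wd (m+2) d) (fun w => ∀ i j, w i = w j)
  rw [← h2] at h3
  rw [← h3]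
  have : ((m + 2 : ℕ) : ℚ) ≠ 0 := by positivity
  rw [Nat.cast_add (Finset.card _), Nat.cast_mul, add_sub_cancel_left, inv_mul_cancel_left₀ this]
end

section
/- Let H = (V,E) be a hypertree such that |e| is prime for each edge e ∈ E. Then the chromatic symmetric function X_H is F-positive: all coefficients in its expansion in the basis of fundamental quasisymmetric functions are nonnegative. -/
/-- A path in the hypergraph with edge set `E`: a sequence
`v₀, e₀, v₁, e₁, …, e_{m-1}, v_m` with distinct edges `eᵢ ∈ E`, distinct vertices
(except that the first and last vertex may coincide), and `vᵢ, vᵢ₊₁ ∈ eᵢ`. -/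
structure HPath {V : Type} (E : Set (Set V)) where
  m : ℕ
  vert : Fin (m + 1) → V
  edge : Fin m → Set V
  edge_mem : ∀ i, edge i ∈ E
  edge_inj : Function.Injective edge
  vert_almost_inj : ∀ i j : Fin (m + 1), vert i = vert j →
    i = j ∨ (i = 0 ∧ j = Fin.last m) ∨ (j = 0 ∧ i = Fin.last m)
  mem_left : ∀ i : Fin m, vert i.castSucc ∈ edge i
  mem_right : ∀ i : Fin m, vert i.succ ∈ edge i

/-- The first vertex of a path. -/
def HPath.first {V : Type} {E : Set (Set V)} (p : HPath E) : V := p.vert 0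

/-- The last vertex of a path. -/
def HPath.last {V : Type} {E : Set (Set V)} (p : HPath E) : V := p.vert (Fin.last p.m)

/-- A cycle is a path with `v₀ = v_m` and more than one edge. -/
def HPath.IsCycle {V : Type} {E : Set (Set V)} (p : HPath E) : Prop :=
  p.first = p.last ∧ 1 < p.m

/-- The hypergraph with edge set `E` is connected on the vertex set `W`. -/
def ConnectedOn {V : Type} (W : Set V) (E : Set (Set V)) : Prop :=
  ∀ v ∈ W, ∀ v' ∈ W, ∃ p : HPath E, p.first = v ∧ p.last = v'

/-- `(W, E)` is a hypertree: every edge is a subset of `W` of size at least 2,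
the hypergraph is connected on `W`, and it has no cycles. -/
def IsHypertreeOn {V : Type} (W : Set V) (E : Set (Set V)) : Prop :=
  (∀ e ∈ E, e ⊆ W ∧ 2 ≤ e.ncard) ∧ ConnectedOn W E ∧ ∀ p : HPath E, ¬ p.IsCycle

/-- The chromatic symmetric function of the hypergraph with edge set `E` on the
finite vertex type `V`: the coefficient of a monomial `d` is the number of colorings
`χ : V → ℕ` with no edge monochromatic and content `d`. -/
noncomputable def chromSym {V : Type} [Fintype V] (E : Set (Set V)) :
    MvPowerSeries ℕ ℚ :=
  fun d => (Nat.card {χ : V → ℕ //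
    (∀ e ∈ E, ¬ ∃ a, ∀ v ∈ e, χ v = a) ∧
    ∀ j : ℕ, d j = Nat.card {v : V // χ v = j}} : ℚ)

theorem exists_next {V : Type} [Fintype V] (e : Set V) (hp : (e.ncard).Prime) :
    ∃ N : V → V, (∀ u ∈ e, N u ∈ e) ∧ Set.InjOn N e ∧ (∀ u ∈ e, N u ≠ u) ∧
      (∀ u ∈ e, ∃ w ∈ e, N w = u) ∧
      (∀ u ∈ e, ∀ v ∈ e, ∃ k : ℕ, N^[k] u = v) ∧
      (∀ χ : V → ℕ, ∀ u ∈ e, ∀ v ∈ e, u ≠ v → (∀ k : ℕ, χ (N^[k] u) = χ (N^[k] v)) →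
        ∃ a, ∀ x ∈ e, χ x = a) := by
  classical
  set p := e.ncard with hpdef
  haveI : Fact p.Prime := ⟨hp⟩
  have hcard : Nat.card e = Nat.card (ZMod p) := by
    rw [Nat.card_zmod]; rfl
  obtain ⟨φ⟩ : Nonempty (e ≃ ZMod p) := Finite.card_eq.mp hcard
  let N : V → V := fun u => if h : u ∈ e then (φ.symm (φ ⟨u, h⟩ + 1) : V) else u
  have hN : ∀ x : ZMod p, N (φ.symm x) = φ.symm (x + 1) := by
    intro x
    simp [N]
  have hNk : ∀ (k : ℕ) (x : ZMod p), N^[k] (φ.symm x) = φ.symm (x + k) := by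
    intro k
    induction k with
    | zero => intro x; simp
    | succ k ih => intro x; rw [Function.iterate_succ_apply, hN, ih]; push_cast; congr 2; ring
  have hs : ∀ u ∈ e, ∃ x : ZMod p, (φ.symm x : V) = u := fun u hu => ⟨φ ⟨u, hu⟩, by simp⟩
  have hinj : ∀ x y : ZMod p, (φ.symm x : V) = φ.symm y → x = y := by
    intro x y h
    exact φ.symm.injective (Subtype.ext h)
  refine ⟨N, ?_, ?_, ?_, ?_, ?_, ?_⟩
  · intro u hu
    obtain ⟨x, rfl⟩ := hs u hu
    rw [hN]; exact Subtype.coe_prop _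
  · intro u hu v hv h
    obtain ⟨x, rfl⟩ := hs u hu
    obtain ⟨y, rfl⟩ := hs v hv
    rw [hN, hN] at h
    have := hinj _ _ h
    rw [add_right_cancel this]
  · intro u hu
    obtain ⟨x, rfl⟩ := hs u hu
    rw [hN]
    intro h
    have := hinj _ _ h
    simp at this
  · intro u hu
    obtain ⟨x, rfl⟩ := hs u hu
    refine ⟨φ.symm (x - 1), Subtype.coe_prop _, ?_⟩
    rw [hN]; simp
  · intro u hu v hv
    obtain ⟨x, rfl⟩ := hs u hu
    obtain ⟨y, rfl⟩ := hs v hv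
    refine ⟨(y - x).val, ?_⟩
    rw [hNk, ZMod.natCast_zmod_val]; simp
  · intro χ u hu v hv huv h
    obtain ⟨x, rfl⟩ := hs u hu
    obtain ⟨y, rfl⟩ := hs v hv
    have hxy : y - x ≠ 0 := by
      intro h0
      exact huv (by rw [sub_eq_zero.mp h0])
    have h1 : ∀ z : ZMod p, χ (φ.symm z) = χ (φ.symm (z + (y - x))) := by
      intro z
      have := h (z - x).val
      rw [hNk, hNk, ZMod.natCast_zmod_val] at this
      convert this using 4 <;> ring
    have h2 : ∀ (m : ℕ), χ (φ.symm 0) = χ (φ.symm (m * (y - x))) := by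
      intro m
      induction m with
      | zero => simp
      | succ m ih =>
        rw [ih, h1]; congr 3; push_cast; ring
    refine ⟨χ (φ.symm 0), ?_⟩
    intro w hw
    obtain ⟨z, rfl⟩ := hs w hw
    rw [h2 (z / (y - x)).val, ZMod.natCast_zmod_val, div_mul_cancel₀ _ hxy]

/-- Walks of length `n` along a family of relations. -/
def RWalk {V : Type} (r : Set V → V → V → Prop) (n : ℕ) (a b : V) : Prop :=
  ∃ (v : ℕ → V) (e : ℕ → Set V), v 0 = a ∧ v n = b ∧ ∀ i < n, r (e i) (v i) (v (i + 1))

theorem RWalk.append {V : Type} {r : Set V → V → V → Prop} {m n : ℕ} {a b c : V}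
    (h1 : RWalk r m a b) (h2 : RWalk r n b c) : RWalk r (m + n) a c := by
  obtain ⟨v, e, hv0, hvm, hv⟩ := h1
  obtain ⟨w, f, hw0, hwm, hw⟩ := h2
  refine ⟨fun i => if i ≤ m then v i else w (i - m),
    fun i => if i < m then e i else f (i - m), by simp [hv0], ?_, ?_⟩
  · by_cases hn : n = 0
    · subst hn; simp [hvm, ← hwm, hw0]
    · simp [hn, hwm]
  · intro i hi
    by_cases him : i < m
    · simp only [him, him.le, if_true, Nat.succ_le_of_lt him]; exact hv i him
    · have h3 : ¬ (i + 1 ≤ m) := by omega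
      have h4 : i + 1 - m = (i - m) + 1 := by omega
      simp only [him, h3, if_false, h4]
      have := hw (i - m) (by omega)
      by_cases h5 : i ≤ m
      · have : i = m := by omega
        subst this
        simpa [hvm, hw0] using hw 0 (by omega)
      · simpa [h5] using this

theorem RWalk.one {V : Type} {r : Set V → V → V → Prop} {a b : V} (e : Set V)
    (h : r e a b) : RWalk r 1 a b := by
  refine ⟨fun i => if i = 0 then a else b, fun _ => e, by simp, by simp, ?_⟩
  intro i hi
  have : i = 0 := by omega
  subst this; simpa using h

theorem RWalk.sub {V : Type} {r : Set V → V → V → Prop} {n : ℕ} {v : ℕ → V} {e : ℕ → Set V}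
    (h : ∀ i < n, r (e i) (v i) (v (i + 1))) (i j : ℕ) (hij : i ≤ j) (hj : j ≤ n) :
    RWalk r (j - i) (v i) (v j) := by
  refine ⟨fun k => v (i + k), fun k => e (i + k), by simp, by simp [hij], ?_⟩
  intro k hk
  exact h (i + k) (by omega)

theorem no_closed_walk {V : Type} {L : Type*} [LinearOrder L] (E : Set (Set V))
    (hc : ∀ p : HPath E, ¬ p.IsCycle) (f : Set V → V → L)
    (m : ℕ) (hm : 0 < m) (a : V) :
    ¬ RWalk (fun e u v => e ∈ E ∧ u ∈ e ∧ v ∈ e ∧ f e u < f e v) m a a := by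
  set r : Set V → V → V → Prop := fun e u v => e ∈ E ∧ u ∈ e ∧ v ∈ e ∧ f e u < f e v with hr
  induction m using Nat.strong_induction_on generalizing a with
  | _ m ih =>
  intro hw
  obtain ⟨v, e, hv0, hvm, hv⟩ := id hw
  have hm1 : 1 < m := by
    rcases Nat.lt_or_ge 1 m with h | h
    · exact h
    · have : m = 1 := by omega
      subst this
      have := (hv 0 (by omega)).2.2.2
      simp only [hv0, zero_add, hvm, lt_irrefl] at this
  have hvert : ∀ i j, i < j → j ≤ m → v i = v j → i = 0 ∧ j = m := by
    intro i j hij hj h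
    by_contra hne
    have h1 := RWalk.sub hv i j hij.le hj
    rw [← h] at h1
    exact ih (j - i) (by omega) (by omega) _ h1
  have hedge : ∀ i j, i < j → j < m → e i ≠ e j := by
    intro i j hij hj h
    obtain ⟨hE, hi1, hi2, hi3⟩ := hv i (by omega)
    obtain ⟨-, hj1, hj2, hj3⟩ := hv j hj
    rw [← h] at hj1 hj2 hj3
    rcases lt_or_ge (f (e i) (v i)) (f (e i) (v (j + 1))) with hlt | hge
    · have w1 := RWalk.sub hv 0 i (by omega) (by omega)
      have w2 : RWalk r 1 (v i) (v (j + 1)) := RWalk.one (e i) ⟨hE, hi1, hj2, hlt⟩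
      have w3 := RWalk.sub hv (j + 1) m (by omega) (by omega)
      have w4 := (w1.append w2).append w3
      rw [hv0, hvm] at w4
      exact ih _ (by omega) (by omega) _ w4
    · have w1 := RWalk.sub hv (i + 1) j (by omega) (by omega)
      have w2 : RWalk r 1 (v j) (v (i + 1)) :=
        RWalk.one (e i) ⟨hE, hj1, hi2, hj3.trans_le (hge.trans hi3.le)⟩
      exact ih _ (by omega) (by omega) _ (w1.append w2)
  refine hc ⟨m, fun i => v i, fun i => e i, fun i => (hv i i.2).1, ?_, ?_,
    fun i => (hv i i.2).2.1, fun i => (hv i i.2).2.2.1⟩ ⟨?_, hm1⟩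
  · intro i j h
    rcases lt_trichotomy i j with h1 | h1 | h1
    · exact absurd h (hedge i j h1 j.2)
    · exact h1
    · exact absurd h.symm (hedge j i h1 i.2)
  · intro i j h
    rcases lt_trichotomy i j with h1 | h1 | h1
    · have := hvert i j h1 (by omega) h
      exact Or.inr (Or.inl ⟨Fin.ext (by simpa using this.1), Fin.ext (by simpa using this.2)⟩)
    · exact Or.inl h1
    · have := hvert j i h1 (by omega) h.symm
      exact Or.inr (Or.inr ⟨Fin.ext (by simpa using this.1), Fin.ext (by simpa using this.2)⟩)
  · simp [HPath.first, HPath.last, hv0, hvm]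

theorem omega_exists {V : Type} [Fintype V] {L : Type*} [LinearOrder L] (E : Set (Set V))
    (hc : ∀ p : HPath E, ¬ p.IsCycle) (f : Set V → V → L)
    (hf : ∀ e ∈ E, Set.InjOn (f e) e) :
    ∃ ω : V → ℕ, Function.Injective ω ∧
      ∀ e ∈ E, ∀ u ∈ e, ∀ v ∈ e, (ω u < ω v ↔ f e u < f e v) := by
  classical
  let r : Set V → V → V → Prop := fun e u v => e ∈ E ∧ u ∈ e ∧ v ∈ e ∧ f e u < f e v
  let P : V → V → Prop := fun a b => ∃ n, RWalk r n a b
  haveI hP : IsPartialOrder V P :=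
    { refl := fun a => ⟨0, fun _ => a, fun _ => ∅, rfl, rfl, by simp⟩
      trans := fun a b c ⟨n, h⟩ ⟨m, h'⟩ => ⟨_, h.append h'⟩
      antisymm := by
        rintro a b ⟨n, h⟩ ⟨m, h'⟩
        by_cases hn : n = 0
        · subst hn
          obtain ⟨v, e, h0, h1, -⟩ := h
          exact h0.symm.trans h1
        · exact absurd (h.append h') (no_closed_walk E hc f _ (by omega) a) }
  obtain ⟨s, hs, hPs⟩ := extend_partialOrder P
  letI : LinearOrder V := 
    { le := s
      le_refl := hs.refl
      le_trans := hs.trans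
      le_antisymm := hs.antisymm
      le_total := hs.total
      toDecidableLE := Classical.decRel _ }
  let φ := (monoEquivOfFin V rfl).symm
  have key : ∀ e ∈ E, ∀ u ∈ e, ∀ v ∈ e, f e u < f e v → (φ u : ℕ) < φ v := by
    intro e he u hu v hv h
    have h1 : u ≤ v := hPs _ _ ⟨1, RWalk.one e ⟨he, hu, hv, h⟩⟩
    have h2 : u ≠ v := by rintro rfl; exact lt_irrefl _ h
    exact φ.lt_iff_lt.mpr (lt_of_le_of_ne h1 h2)
  refine ⟨fun v => φ v, fun a b h => φ.injective (Fin.ext h), ?_⟩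
  intro e he u hu v hv
  refine ⟨fun h => ?_, key e he u hu v hv⟩
  rcases lt_trichotomy (f e u) (f e v) with h1 | h1 | h1
  · exact h1
  · have := hf e he hu hv h1
    subst this; exact absurd h (lt_irrefl _)
  · exact absurd h (lt_asymm (key e he v hv u hu h1))

theorem lex_iff {n : ℕ} (g w : Fin n → ℕ) (hw : Function.Injective w) :
    (∀ i : ℕ, ∀ h : i + 1 < n,
      g ⟨i, Nat.lt_of_succ_lt h⟩ ≤ g ⟨i + 1, h⟩ ∧
      (w ⟨i + 1, h⟩ < w ⟨i, Nat.lt_of_succ_lt h⟩ →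
        g ⟨i, Nat.lt_of_succ_lt h⟩ < g ⟨i + 1, h⟩)) ↔
    ∀ s t : Fin n, s < t → (g s < g t ∨ g s = g t ∧ w s < w t) := by
  constructor
  · intro H
    have : ∀ k i : ℕ, ∀ h : i + k + 1 < n,
        (g ⟨i, by omega⟩ < g ⟨i + k + 1, h⟩ ∨
          g ⟨i, by omega⟩ = g ⟨i + k + 1, h⟩ ∧ w ⟨i, by omega⟩ < w ⟨i + k + 1, h⟩) := by
      have step : ∀ i : ℕ, ∀ h : i + 1 < n, (g ⟨i, by omega⟩ < g ⟨i + 1, h⟩ ∨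
          g ⟨i, by omega⟩ = g ⟨i + 1, h⟩ ∧ w ⟨i, by omega⟩ < w ⟨i + 1, h⟩) := by
        intro i h
        obtain ⟨h1, h2⟩ := H i h
        have h3 : w ⟨i, by omega⟩ ≠ w ⟨i + 1, h⟩ := by
          intro h4
          have := congrArg Fin.val (hw h4)
          simp at this
        by_cases h5 : w ⟨i + 1, h⟩ < w ⟨i, by omega⟩
        · exact Or.inl (h2 h5)
        · omega
      intro k
      induction k with
      | zero => intro i h; exact step i h
      | succ k ih =>
        intro i h
        have h1 := ih i (by omega)
        have h2 := step (i + k + 1) (by omega)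
        have h3 : (⟨i + (k + 1) + 1, h⟩ : Fin n) = ⟨i + k + 1 + 1, by omega⟩ := Fin.ext (by simp; omega)
        rw [h3]
        omega
    intro s t hst
    have h1 := this (t - s - 1) s (by omega)
    have h2 : (⟨(s : ℕ) + (t - s - 1) + 1, by omega⟩ : Fin n) = t := Fin.ext (by simp; omega)
    rw [h2] at h1
    exact h1
  · intro H i h
    have := H ⟨i, by omega⟩ ⟨i + 1, h⟩ (by simp [Fin.lt_def])
    omega

theorem finite_content (n : ℕ) (Q : (Fin n → ℕ) → Prop) (d : ℕ →₀ ℕ) :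
    Finite {g : Fin n → ℕ // Q g ∧ ∀ j : ℕ, d j = Nat.card {t : Fin n // g t = j}} := by
  apply Set.Finite.subset (s := Set.pi Set.univ fun _ : Fin n => (d.support : Set ℕ))
  · exact Set.Finite.pi' (fun _ => d.support.finite_toSet) |>.subset (by
      intro g hg i; exact hg i trivial)
  · rintro g ⟨-, hg⟩ t -
    simp only [Finset.mem_coe, Finsupp.mem_support_iff, hg]
    haveI : Nonempty {s : Fin n // g s = g t} := ⟨⟨t, rfl⟩⟩
    exact Nat.card_pos.ne'

theorem core {V : Type} [Fintype V] (E : Set (Set V))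
    (hc : ∀ p : HPath E, ¬ p.IsCycle) (hp : ∀ e ∈ E, (e.ncard).Prime)
    (n : ℕ) (hn : Fintype.card V = n) :
    ∃ w : (V ≃ Fin n) → V → ℕ, (∀ π, Function.Injective (w π)) ∧
      (∀ (π : V ≃ Fin n) (χ : V → ℕ),
        (∀ u v, π u < π v → (χ u < χ v ∨ χ u = χ v ∧ w π u < w π v)) →
          ∀ e ∈ E, ¬ ∃ a, ∀ v ∈ e, χ v = a) ∧
      (∀ (π π' : V ≃ Fin n) (χ : V → ℕ),
        (∀ u v, π u < π v → (χ u < χ v ∨ χ u = χ v ∧ w π u < w π v)) →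
        (∀ u v, π' u < π' v → (χ u < χ v ∨ χ u = χ v ∧ w π' u < w π' v)) → π = π') ∧
      (∀ χ : V → ℕ, (∀ e ∈ E, ¬ ∃ a, ∀ v ∈ e, χ v = a) →
        ∃ π : V ≃ Fin n, ∀ u v, π u < π v → (χ u < χ v ∨ χ u = χ v ∧ w π u < w π v)) := by
  classical
  have hN' : ∀ e : Set V, ∃ N : V → V, e ∈ E → _ := fun e => by
    by_cases he : e ∈ E
    · obtain ⟨N, h⟩ := exists_next e (hp e he)
      exact ⟨N, fun _ => h⟩
    · exact ⟨id, fun h => absurd h he⟩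
  choose N hN using hN'
  let adm : (Set V → V → V → Prop) → (V → ℕ) → Prop := fun c ω =>
    Function.Injective ω ∧ ∀ e ∈ E, ∀ u ∈ e, ∀ v ∈ e, (ω u < ω v ↔ c e (N e u) (N e v))
  let Ω : (Set V → V → V → Prop) → V → ℕ := fun c =>
    if h : ∃ ω, adm c ω then h.choose else fun _ => 0
  have hΩ : ∀ c, (∃ ω, adm c ω) → adm c (Ω c) := by
    intro c h
    simp only [Ω, dif_pos h]
    exact h.choose_spec
  let cl : (V ≃ Fin n) → Set V → V → V → Prop := fun π e u v =>
    e ∈ E ∧ u ∈ e ∧ v ∈ e ∧ π u < π v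
  have hadm : ∀ π, adm (cl π) (Ω (cl π)) := by
    intro π
    apply hΩ
    obtain ⟨ω, h1, h2⟩ := omega_exists E hc (fun e u => π (N e u)) (by
      intro e he u hu v hv h
      exact (hN e he).2.1 hu hv (π.injective h))
    refine ⟨ω, h1, fun e he u hu v hv => ?_⟩
    rw [h2 e he u hu v hv]
    exact ⟨fun h => ⟨he, (hN e he).1 u hu, (hN e he).1 v hv, h⟩, fun h => h.2.2.2⟩
  have hadm' : ∀ π : V ≃ Fin n, ∀ e ∈ E, ∀ u ∈ e, ∀ v ∈ e,
      (Ω (cl π) u < Ω (cl π) v ↔ π (N e u) < π (N e v)) := by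
    intro π e he u hu v hv
    rw [(hadm π).2 e he u hu v hv]
    exact ⟨fun h => h.2.2.2, fun h => ⟨he, (hN e he).1 u hu, (hN e he).1 v hv, h⟩⟩
  have hNk : ∀ e ∈ E, ∀ u ∈ e, ∀ k : ℕ, (N e)^[k] u ∈ e := by
    intro e he u hu k
    induction k with
    | zero => exact hu
    | succ k ih => rw [Function.iterate_succ_apply']; exact (hN e he).1 _ ih
  refine ⟨fun π => Ω (cl π), fun π => (hadm π).1, ?_, ?_, ?_⟩
  · rintro π χ hG e he ⟨a, ha⟩
    have hne : e.Nonempty := by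
      apply Set.nonempty_of_ncard_ne_zero
      exact (hp e he).ne_zero
    obtain ⟨u, hu, hmin⟩ := Set.exists_min_image e π (Set.toFinite e) hne
    obtain ⟨x, hx, hxu⟩ := (hN e he).2.2.2.1 u hu
    have hxne : x ≠ u := by
      rintro rfl
      exact (hN e he).2.2.1 x hx hxu
    have hlt : π u < π x := lt_of_le_of_ne (hmin x hx) (fun h => hxne (π.injective h).symm)
    rcases hG u x hlt with h | ⟨-, h⟩
    · rw [ha u hu, ha x hx] at h; exact lt_irrefl _ h
    · have h := (hadm' π e he u hu x hx).mp h
      rw [hxu] at h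
      exact absurd (hmin _ ((hN e he).1 u hu)) (not_le.mpr h)
  · have key : ∀ (π π' : V ≃ Fin n) (χ : V → ℕ),
        (∀ u v, π u < π v → (χ u < χ v ∨ χ u = χ v ∧ Ω (cl π) u < Ω (cl π) v)) →
        (∀ u v, π' u < π' v → (χ u < χ v ∨ χ u = χ v ∧ Ω (cl π') u < Ω (cl π') v)) →
        ∀ e ∈ E, ∀ u ∈ e, ∀ v ∈ e, π u < π v → π' u < π' v := by
      intro π π' χ h1 h2 e he u hu v hv huv
      by_contra hcon
      have hne : u ≠ v := by rintro rfl; exact lt_irrefl _ huv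
      have hlt : π' v < π' u := lt_of_le_of_ne (not_lt.mp hcon)
        (fun h => hne (π'.injective h).symm)
      have hall : ∀ k : ℕ, π ((N e)^[k] u) < π ((N e)^[k] v) ∧
          π' ((N e)^[k] v) < π' ((N e)^[k] u) := by
        intro k
        induction k with
        | zero => exact ⟨huv, hlt⟩
        | succ k ih =>
          have hu' := hNk e he u hu k
          have hv' := hNk e he v hv k
          rw [Function.iterate_succ_apply', Function.iterate_succ_apply',
            ← hadm' π e he _ hu' _ hv', ← hadm' π' e he _ hv' _ hu']
          have g1 := h1 _ _ ih.1
          have g2 := h2 _ _ ih.2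
          omega
      obtain ⟨j, hj⟩ := (hN e he).2.2.2.2.1 u hu v hv
      have hmono : StrictMono (fun m : ℕ => π ((N e)^[m * j] u)) := by
        apply strictMono_nat_of_lt_succ
        intro m
        have := (hall (m * j)).1
        rw [← hj, ← Function.iterate_add_apply] at this
        rw [Nat.succ_mul]
        exact this
      exact not_injective_infinite_finite _ hmono.injective
    intro π π' χ h1 h2
    have hcl : cl π = cl π' := by
      funext e u v
      apply propext
      constructor
      · rintro ⟨he, hu, hv, h⟩
        exact ⟨he, hu, hv, key π π' χ h1 h2 e he u hu v hv h⟩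
      · rintro ⟨he, hu, hv, h⟩
        exact ⟨he, hu, hv, key π' π χ h2 h1 e he u hu v hv h⟩
    have hlt : ∀ u v, π u < π v → π' u < π' v := by
      intro u v h
      by_contra hcon
      have hne : u ≠ v := by rintro rfl; exact lt_irrefl _ h
      have hlt : π' v < π' u := lt_of_le_of_ne (not_lt.mp hcon)
        (fun h => hne (π'.injective h).symm)
      have g1 := h1 _ _ h
      have g2 := h2 _ _ hlt
      simp only [hcl] at g1 g2
      omega
    have hsm : StrictMono (fun t : Fin n => π' (π.symm t)) := by
      intro s t hst
      exact hlt _ _ (by simpa using hst)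
    let o : Fin n ≃o Fin n := hsm.orderIsoOfSurjective _ (π'.surjective.comp π.symm.surjective)
    have ho : o = OrderIso.refl _ := Subsingleton.elim _ _
    ext v
    have := congrArg (fun f : Fin n ≃o Fin n => f (π v)) ho
    simp only [o, StrictMono.coe_orderIsoOfSurjective, Equiv.symm_apply_apply,
      OrderIso.refl_apply] at this
    rw [this]
  · intro χ hχ
    let wd : Set V → V → Lex (ℕ → ℕ) := fun e u => toLex fun k => χ ((N e)^[k] u)
    have hwd : ∀ e u v, wd e u < wd e v ↔
        χ u < χ v ∨ χ u = χ v ∧ wd e (N e u) < wd e (N e v) := by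
      intro e u v
      constructor
      · rintro ⟨k, hk1, hk2⟩
        cases k with
        | zero => exact Or.inl hk2
        | succ k =>
          refine Or.inr ⟨hk1 0 (Nat.succ_pos k), k, fun j hj => ?_, ?_⟩
          · exact hk1 (j + 1) (by omega)
          · exact hk2
      · rintro (h | ⟨h, k, hk1, hk2⟩)
        · exact ⟨0, fun j hj => absurd hj (Nat.not_lt_zero j), h⟩
        · refine ⟨k + 1, fun j hj => ?_, hk2⟩
          cases j with
          | zero => exact h
          | succ j => exact hk1 j (by omega)
    have hwinj : ∀ e ∈ E, Set.InjOn (wd e) e := by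
      intro e he u hu v hv h
      by_contra hne
      refine hχ e he ((hN e he).2.2.2.2.2 χ u hu v hv hne fun k => ?_)
      exact congrFun (toLex.injective h) k
    let cx : Set V → V → V → Prop := fun e u v => e ∈ E ∧ u ∈ e ∧ v ∈ e ∧ wd e u < wd e v
    have hcx : adm cx (Ω cx) := by
      apply hΩ
      obtain ⟨ω, h1, h2⟩ := omega_exists E hc (fun e u => wd e (N e u)) (by
        intro e he u hu v hv h
        exact (hN e he).2.1 hu hv
          (hwinj e he ((hN e he).1 u hu) ((hN e he).1 v hv) h))
      refine ⟨ω, h1, fun e he u hu v hv => ?_⟩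
      rw [h2 e he u hu v hv]
      exact ⟨fun h => ⟨he, (hN e he).1 u hu, (hN e he).1 v hv, h⟩, fun h => h.2.2.2⟩
    let ky : V → ℕ ×ₗ ℕ := fun v => toLex (χ v, Ω cx v)
    have hky : Function.Injective ky := by
      intro u v h
      exact hcx.1 (congrArg Prod.snd (toLex.injective h))
    letI : LinearOrder V := LinearOrder.lift' ky hky
    let φ := (monoEquivOfFin V hn).symm
    have hφ : ∀ u v, φ u < φ v ↔ (χ u < χ v ∨ χ u = χ v ∧ Ω cx u < Ω cx v) := by
      intro u v
      rw [φ.lt_iff_lt]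
      change ky u < ky v ↔ _
      simp [ky, Prod.Lex.toLex_lt_toLex]
    have hcl : cl φ.toEquiv = cx := by
      funext e u v
      apply propext
      refine and_congr_right fun he => and_congr_right fun hu => and_congr_right fun hv => ?_
      change φ u < φ v ↔ _
      rw [hφ, hwd, hcx.2 e he u hu v hv]
      refine or_congr_right (and_congr_right fun _ => ?_)
      exact ⟨fun h => h.2.2.2, fun h => ⟨he, (hN e he).1 u hu, (hN e he).1 v hv, h⟩⟩
    refine ⟨φ.toEquiv, fun u v h => ?_⟩
    simp only [hcl]
    exact (hφ u v).mp h

/-- If `H` is a hypertree all of whose edges have prime size, then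
`X_H` is `F`-positive: it is a nonnegative combination of fundamental quasisymmetric
functions of degree `n = |V|`. -/
theorem hypertree_prime_F_positive {V : Type} [Fintype V] (E : Set (Set V))
    (hT : IsHypertreeOn Set.univ E) (hp : ∀ e ∈ E, (e.ncard).Prime)
    (n : ℕ) (hn : Fintype.card V = n) :
    ∃ a : Finset ℕ → ℚ, (∀ S, 0 ≤ a S) ∧
      chromSym E = ∑ S ∈ (Finset.range (n - 1)).powerset, a S • funF n ↑S := by
  classical
  obtain ⟨w, hw, hA, hB, hC⟩ := core E hT.2.2 hp n hn
  let D : (V ≃ Fin n) → Finset ℕ := fun π => (Finset.range (n - 1)).filter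
    (fun i => ∃ h : i + 1 < n,
      w π (π.symm ⟨i + 1, h⟩) < w π (π.symm ⟨i, Nat.lt_of_succ_lt h⟩))
  have hD : ∀ π (g : Fin n → ℕ), (∀ i : ℕ, ∀ h : i + 1 < n,
      g ⟨i, Nat.lt_of_succ_lt h⟩ ≤ g ⟨i + 1, h⟩ ∧
      (i ∈ (D π : Set ℕ) → g ⟨i, Nat.lt_of_succ_lt h⟩ < g ⟨i + 1, h⟩)) ↔
      ∀ u v, π u < π v → (g (π u) < g (π v) ∨ g (π u) = g (π v) ∧ w π u < w π v) := by
    intro π g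
    have h1 := lex_iff g (w π ∘ π.symm) ((hw π).comp π.symm.injective)
    have h2 : (∀ s t : Fin n, s < t →
        (g s < g t ∨ g s = g t ∧ (w π ∘ π.symm) s < (w π ∘ π.symm) t)) ↔
        ∀ u v, π u < π v → (g (π u) < g (π v) ∨ g (π u) = g (π v) ∧ w π u < w π v) := by
      constructor
      · intro H u v h
        simpa using H _ _ h
      · intro H s t h
        simpa using H (π.symm s) (π.symm t) (by simpa using h)
    rw [← h2, ← h1]
    refine forall_congr' fun i => forall_congr' fun h => and_congr_right fun _ => ?_
    have h3 : i ∈ (D π : Set ℕ) ↔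
        (w π ∘ π.symm) ⟨i + 1, h⟩ < (w π ∘ π.symm) ⟨i, Nat.lt_of_succ_lt h⟩ := by
      simp only [D, Finset.mem_coe, Finset.mem_filter, Finset.mem_range, Function.comp]
      constructor
      · rintro ⟨_, _, h4⟩; exact h4
      · intro h4; exact ⟨by omega, h, h4⟩
    rw [h3]
  have hcont : ∀ (π : V ≃ Fin n) (g : Fin n → ℕ) (j : ℕ),
      Nat.card {v : V // g (π v) = j} = Nat.card {t : Fin n // g t = j} := by
    intro π g j
    exact Nat.card_congr (π.subtypeEquiv fun v => Iff.rfl)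
  have hX : chromSym E = ∑ π : V ≃ Fin n, funF n (D π : Set ℕ) := by
    funext d
    have hsum : (∑ π : V ≃ Fin n, funF n (D π : Set ℕ)) d =
        ∑ π : V ≃ Fin n, funF n (D π : Set ℕ) d := by
      exact Finset.sum_apply d _ _
    rw [hsum]
    unfold chromSym funF
    have hfin : ∀ π : V ≃ Fin n, Finite {g : Fin n → ℕ //
      (∀ i : ℕ, ∀ h : i + 1 < n,
        g ⟨i, Nat.lt_of_succ_lt h⟩ ≤ g ⟨i + 1, h⟩ ∧
        (i ∈ (D π : Set ℕ) → g ⟨i, Nat.lt_of_succ_lt h⟩ < g ⟨i + 1, h⟩)) ∧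
      ∀ j : ℕ, d j = Nat.card {t : Fin n // g t = j}} := fun π => finite_content n _ d
    rw [← Nat.cast_sum, ← Nat.card_sigma]
    congr 1
    symm
    refine Nat.card_congr (Equiv.ofBijective (fun x => ⟨x.2.1 ∘ x.1,
      hA x.1 _ ((hD x.1 x.2.1).mp x.2.2.1),
      fun j => (x.2.2.2 j).trans (hcont x.1 x.2.1 j).symm⟩) ⟨?_, ?_⟩)
    · rintro ⟨π, g, hg1, hg2⟩ ⟨π', g', hg1', hg2'⟩ h
      have h' : g ∘ π = g' ∘ π' := congrArg Subtype.val h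
      have e1 := (hD π g).mp hg1
      have e2 := (hD π' g').mp hg1'
      have hππ : π = π' := hB π π' (g ∘ π) e1 (by rw [h']; exact e2)
      subst hππ
      have : g = g' := by
        funext t
        simpa using congrFun h' (π.symm t)
      subst this
      rfl
    · rintro ⟨χ, h1, h2⟩
      obtain ⟨π, hπ⟩ := hC χ h1
      refine ⟨⟨π, χ ∘ π.symm, (hD π _).mpr (by simpa using hπ), ?_⟩, ?_⟩
      · intro j
        rw [h2 j, ← hcont π]
        simp
      · apply Subtype.ext
        funext v
        simp
  refine ⟨fun S => ∑ π : V ≃ Fin n, if D π = S then 1 else 0, ?_, ?_⟩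
  · intro S
    exact Finset.sum_nonneg fun π _ => by split_ifs <;> norm_num
  · rw [hX]
    simp only [Finset.sum_smul, ite_smul, one_smul, zero_smul]
    rw [Finset.sum_comm]
    refine Finset.sum_congr rfl fun π _ => ?_
    rw [Finset.sum_ite_eq, if_pos]
    exact Finset.mem_powerset.mpr (Finset.filter_subset _ _)
end

section
/- Let H = (V,E) be a hypertree with |e| prime for every e ∈ E, with a fixed edge ordering e₁,…,e_k satisfying |(e₁∪⋯∪e_i) ∩ e_{i+1}| = 1 and fixed cyclic permutations c_i : e_i → e_i. Then X_H = Σ_{π ∈ S_V} F_{Des_H(π)}, where Des_H(π) is the set of H-descents of π. -/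
/-- The set of `H`-descents of a labeling `π : V ≃ Fin n`, with respect to the edge
enumeration `f : Fin k → Set V` and cyclic permutations `c i` of the edges `f i`:
`i` is an `H`-descent if, along the (unique) path
`π⁻¹(i) = v₀, e_{j₀}, v₁, …, e_{j_{l-1}}, v_l = π⁻¹(i+1)`, with `j_r` minimal among
the edge indices, one has `π (c_{j_r} (v_r)) > π (c_{j_r} (v_{r+1}))`. -/
def DesH {V : Type} {k : ℕ} (f : Fin k → Set V) (c : Fin k → Equiv.Perm V)
    {n : ℕ} (π : V ≃ Fin n) : Set ℕ :=
  {i | ∃ h : i + 1 < n, ∃ p : HPath (Set.range f),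
    p.first = π.symm ⟨i, Nat.lt_of_succ_lt h⟩ ∧ p.last = π.symm ⟨i + 1, h⟩ ∧
    ∃ idx : Fin p.m → Fin k, (∀ s, f (idx s) = p.edge s) ∧
      ∃ r : Fin p.m, (∀ s, idx r ≤ idx s) ∧
        π (c (idx r) (p.vert r.succ)) < π (c (idx r) (p.vert r.castSucc))}

namespace HT

/-- Gate maps: `u j v` is the vertex of `f j` closest to `v`. -/
theorem exists_gate {V : Type} (k : ℕ) (f : Fin k → Set V)
    (hne : ∀ i, (f i).Nonempty)
    (hord : ∀ i : ℕ, ∀ hi : i + 1 < k,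
      ((⋃ j ∈ {j : Fin k | (j : ℕ) ≤ i}, f j) ∩ f ⟨i + 1, hi⟩).ncard = 1) (j : Fin k) :
    ∃ u : V → V, (∀ x ∈ f j, u x = x) ∧
      ∀ i, i ≠ j → ∀ x ∈ f i, ∀ y ∈ f i, u x = u y := by
  classical
  have hg : ∀ m : Fin k, ∃ g ∈ f m, ∀ i : Fin k, i < m → ∀ x ∈ f i, x ∈ f m → x = g := by
    rintro ⟨m, hm⟩
    cases m with
    | zero =>
      obtain ⟨g, hg⟩ := hne ⟨0, hm⟩
      exact ⟨g, hg, fun i hi => absurd hi (by simp [Fin.lt_def])⟩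
    | succ m =>
      obtain ⟨g, hg⟩ := Set.ncard_eq_one.1 (hord m hm)
      have hgm : g ∈ (⋃ j ∈ {j : Fin k | (j : ℕ) ≤ m}, f j) ∩ f ⟨m + 1, hm⟩ := by
        rw [hg]; rfl
      refine ⟨g, hgm.2, fun i hi x hx hx' => ?_⟩
      have : x ∈ (⋃ j ∈ {j : Fin k | (j : ℕ) ≤ m}, f j) ∩ f ⟨m + 1, hm⟩ := by
        refine ⟨Set.mem_biUnion (x := i) ?_ hx, hx'⟩
        simp only [Set.mem_ofPred_eq]
        have := Fin.lt_def.1 hi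
        simp at this
        omega
      rw [hg] at this
      exact this
  have key : ∀ m : ℕ, m ≤ k → ∃ u : V → V, ((j : ℕ) < m → ∀ x ∈ f j, u x = x) ∧
      ∀ i : Fin k, (i : ℕ) < m → i ≠ j → ∀ x ∈ f i, ∀ y ∈ f i, u x = u y := by
    intro m
    induction m with
    | zero => exact fun _ => ⟨id, by simp, by simp⟩
    | succ m ih =>
      intro hm
      obtain ⟨u, h1, h2⟩ := ih (by omega)
      obtain ⟨g, hgm, hg⟩ := hg ⟨m, hm⟩
      by_cases hj : (j : ℕ) = m
      · have hj' : j = ⟨m, hm⟩ := Fin.ext hj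
        refine ⟨fun x => if x ∈ f j then x else g, fun _ x hx => by simp [hx], ?_⟩
        intro i hi hij x hx y hy
        have hlt : i < ⟨m, hm⟩ := by
          rw [Fin.lt_def]
          have : (i : ℕ) ≠ j := fun h => hij (Fin.ext h)
          simp only
          omega
        have aux : ∀ x ∈ f i, (if x ∈ f j then x else g) = g := by
          intro x hx
          split_ifs with h
          · exact hg i hlt x hx (hj' ▸ h)
          · rfl
        simp only [aux x hx, aux y hy]
      · refine ⟨fun x => if ∃ i : Fin k, (i : ℕ) < m ∧ x ∈ f i then u x else u g, ?_, ?_⟩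
        · intro hjm x hx
          have : ∃ i : Fin k, (i : ℕ) < m ∧ x ∈ f i := ⟨j, by omega, hx⟩
          simp only [this, if_true]
          exact h1 (by omega) x hx
        · intro i hi hij x hx y hy
          by_cases him : (i : ℕ) < m
          · have e1 : ∃ i : Fin k, (i : ℕ) < m ∧ x ∈ f i := ⟨i, him, hx⟩
            have e2 : ∃ i : Fin k, (i : ℕ) < m ∧ y ∈ f i := ⟨i, him, hy⟩
            simp only [e1, e2, if_true]
            exact h2 i him hij x hx y hy
          · have hi' : i = ⟨m, hm⟩ := Fin.ext (by simp; omega)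
            have aux : ∀ x ∈ f i,
                (if ∃ i : Fin k, (i : ℕ) < m ∧ x ∈ f i then u x else u g) = u g := by
              intro x hx
              split_ifs with h
              · obtain ⟨l, hl, hxl⟩ := h
                rw [hg l (by rw [Fin.lt_def]; exact hl) x hxl (hi' ▸ hx)]
              · rfl
            simp only [aux x hx, aux y hy]
  obtain ⟨u, h1, h2⟩ := key k le_rfl
  exact ⟨u, h1 j.2, fun i hij => h2 i i.2 hij⟩

section
variable {V : Type} {k : ℕ} {f : Fin k → Set V} {u : Fin k → V → V}

/-- `u j` is constant along portions of a path not using the edge `f j`. -/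
theorem const_seg (hb : ∀ i j, i ≠ j → ∀ x ∈ f i, ∀ y ∈ f i, u j x = u j y)
    (p : HPath (Set.range f)) (idx : Fin p.m → Fin k) (hidx : ∀ s, f (idx s) = p.edge s)
    (j : Fin k) (a : ℕ) :
    ∀ (b : ℕ) (hab : a ≤ b) (hbm : b < p.m + 1),
      (∀ s : Fin p.m, a ≤ s → (s : ℕ) < b → idx s ≠ j) →
      u j (p.vert ⟨a, by omega⟩) = u j (p.vert ⟨b, hbm⟩) := by
  intro b hab
  induction b, hab using Nat.le_induction with
  | base => intro _ _; rfl
  | succ b hab ih =>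
    intro hbm hs
    rw [ih (by omega) (fun s h1 h2 => hs s h1 (by omega))]
    have hm : b < p.m := by omega
    have h1 := p.mem_left ⟨b, hm⟩
    have h2 := p.mem_right ⟨b, hm⟩
    rw [← hidx] at h1 h2
    exact hb _ j (hs ⟨b, hm⟩ hab (by simp)) _ h1 _ h2

theorem path_at (ha : ∀ j, ∀ x ∈ f j, u j x = x)
    (hb : ∀ i j, i ≠ j → ∀ x ∈ f i, ∀ y ∈ f i, u j x = u j y)
    (p : HPath (Set.range f)) (idx : Fin p.m → Fin k) (hidx : ∀ s, f (idx s) = p.edge s)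
    (r : Fin p.m) :
    u (idx r) p.first = p.vert r.castSucc ∧ u (idx r) p.last = p.vert r.succ := by
  have hinj : Function.Injective idx := fun s t h => p.edge_inj (by rw [← hidx, ← hidx, h])
  have h1 := p.mem_left r
  have h2 := p.mem_right r
  rw [← hidx] at h1 h2
  constructor
  · rw [← ha _ _ h1]
    have := const_seg hb p idx hidx (idx r) 0 r (by omega) (by omega)
      (fun s _ hs h => by rw [hinj h] at hs; omega)
    exact this
  · rw [← ha _ _ h2]
    have := const_seg hb p idx hidx (idx r) (r + 1) p.m (by omega) (by omega)
      (fun s hs _ h => by rw [hinj h] at hs; omega)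
    exact this.symm

theorem exists_idx (p : HPath (Set.range f)) :
    ∃ idx : Fin p.m → Fin k, ∀ s, f (idx s) = p.edge s := by
  choose idx h using p.edge_mem
  exact ⟨idx, h⟩

theorem vert_ne (p : HPath (Set.range f)) (h : p.first ≠ p.last) (r : Fin p.m) :
    p.vert r.castSucc ≠ p.vert r.succ := by
  intro he
  rcases p.vert_almost_inj _ _ he with h1 | ⟨h1, h2⟩ | ⟨h1, h2⟩
  · have := congrArg Fin.val h1
    simp at this
  · rw [h1, h2] at he
    exact h he
  · exact absurd h1 (Fin.succ_ne_zero r)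

theorem gate_mem (ha : ∀ j, ∀ x ∈ f j, u j x = x)
    (hb : ∀ i j, i ≠ j → ∀ x ∈ f i, ∀ y ∈ f i, u j x = u j y)
    (hC : ConnectedOn Set.univ (Set.range f)) {v w : V} {j : Fin k}
    (h : u j v ≠ u j w) : u j v ∈ f j ∧ u j w ∈ f j := by
  obtain ⟨p, rfl, rfl⟩ := hC v trivial w trivial
  obtain ⟨idx, hidx⟩ := exists_idx p
  by_cases hj : ∃ r, idx r = j
  · obtain ⟨r, rfl⟩ := hj
    obtain ⟨h1, h2⟩ := path_at ha hb p idx hidx r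
    rw [h1, h2, hidx]
    exact ⟨p.mem_left r, p.mem_right r⟩
  · push Not at hj
    exact absurd (const_seg hb p idx hidx j 0 p.m (by omega) (by omega)
      (fun s _ _ => hj s)) h

theorem exists_sep (ha : ∀ j, ∀ x ∈ f j, u j x = x)
    (hb : ∀ i j, i ≠ j → ∀ x ∈ f i, ∀ y ∈ f i, u j x = u j y)
    (hC : ConnectedOn Set.univ (Set.range f)) {v w : V} (h : v ≠ w) :
    ∃ j, u j v ≠ u j w := by
  obtain ⟨p, rfl, rfl⟩ := hC v trivial w trivial
  obtain ⟨idx, hidx⟩ := exists_idx p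
  have hm : 0 < p.m := by
    rcases Nat.eq_zero_or_pos p.m with h0 | h0
    · exfalso
      apply h
      unfold HPath.first HPath.last
      congr 1
      apply Fin.ext
      simp [h0]
    · exact h0
  refine ⟨idx ⟨0, hm⟩, ?_⟩
  obtain ⟨h1, h2⟩ := path_at ha hb p idx hidx ⟨0, hm⟩
  rw [h1, h2]
  exact vert_ne p h _

variable {n : ℕ}

/-- lexicographic key -/
def K (c : Fin k → Equiv.Perm V) (u : Fin k → V → V) (π : V ≃ Fin n) (v : V) :
    Lex (Fin k → Fin n) := toLex (fun j => π (c j (u j v)))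

theorem K_inj (ha : ∀ j, ∀ x ∈ f j, u j x = x)
    (hb : ∀ i j, i ≠ j → ∀ x ∈ f i, ∀ y ∈ f i, u j x = u j y)
    (hC : ConnectedOn Set.univ (Set.range f)) (c : Fin k → Equiv.Perm V) (π : V ≃ Fin n) :
    Function.Injective (K c u π) := by
  intro v w h
  by_contra hvw
  obtain ⟨j, hj⟩ := exists_sep ha hb hC hvw
  have := congrFun (toLex.injective h) j
  exact hj ((c j).injective (π.injective this))

theorem mem_DesH (ha : ∀ j, ∀ x ∈ f j, u j x = x)
    (hb : ∀ i j, i ≠ j → ∀ x ∈ f i, ∀ y ∈ f i, u j x = u j y)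
    (hC : ConnectedOn Set.univ (Set.range f)) (c : Fin k → Equiv.Perm V) (π : V ≃ Fin n)
    (i : ℕ) (h : i + 1 < n) :
    i ∈ DesH f c π ↔
      K c u π (π.symm ⟨i + 1, h⟩) < K c u π (π.symm ⟨i, Nat.lt_of_succ_lt h⟩) := by
  have hne : π.symm ⟨i, Nat.lt_of_succ_lt h⟩ ≠ π.symm ⟨i + 1, h⟩ := by
    intro h'
    have := congrArg Fin.val (π.symm.injective h')
    simp at this
  constructor
  · rintro ⟨_, p, h1, h2, idx, hidx, r, hr, hlt⟩
    rw [← h1, ← h2]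
    obtain ⟨e1, e2⟩ := path_at ha hb p idx hidx r
    refine ⟨idx r, fun i hi => ?_, ?_⟩
    · have : u i p.first = u i p.last := const_seg hb p idx hidx i 0 p.m (by omega) (by omega)
        (fun s _ _ he => absurd (hr s) (by rw [he]; exact not_le.2 hi))
      change π (c i (u i p.last)) = π (c i (u i p.first))
      rw [this]
    · change π (c _ (u _ p.last)) < π (c _ (u _ p.first))
      rw [e1, e2]
      exact hlt
  · rintro ⟨j, hj1, hj2⟩
    change π (c _ (u _ _)) < π (c _ (u _ _)) at hj2
    replace hj1 : ∀ i' < j, u i' (π.symm ⟨i + 1, h⟩) =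
        u i' (π.symm ⟨i, Nat.lt_of_succ_lt h⟩) :=
      fun i' hi' => (c i').injective (π.injective (hj1 i' hi'))
    obtain ⟨p, h1, h2⟩ := hC (π.symm ⟨i, Nat.lt_of_succ_lt h⟩) trivial (π.symm ⟨i + 1, h⟩) trivial
    obtain ⟨idx, hidx⟩ := exists_idx p
    rw [← h1, ← h2] at hj1 hj2 hne
    have hr : ∃ r, idx r = j := by
      by_contra hcon
      push Not at hcon
      have : u j p.first = u j p.last := const_seg hb p idx hidx j 0 p.m (by omega) (by omega)
        (fun s _ _ => hcon s)
      rw [this] at hj2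
      exact lt_irrefl _ hj2
    obtain ⟨r, rfl⟩ := hr
    refine ⟨h, p, h1, h2, idx, hidx, r, fun s => ?_, ?_⟩
    · by_contra hs
      obtain ⟨e1, e2⟩ := path_at ha hb p idx hidx s
      have := hj1 _ (not_le.1 hs)
      rw [e1, e2] at this
      exact vert_ne p hne s this.symm
    · obtain ⟨e1, e2⟩ := path_at ha hb p idx hidx r
      rw [e1, e2] at hj2
      exact hj2

/-- `π` is compatible with `χ`. -/
def Good (c : Fin k → Equiv.Perm V) (u : Fin k → V → V) (χ : V → ℕ) (π : V ≃ Fin n) : Prop :=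
  ∀ v w, π v < π w ↔ χ v < χ w ∨ χ v = χ w ∧ K c u π v < K c u π w

theorem good_iff (ha : ∀ j, ∀ x ∈ f j, u j x = x)
    (hb : ∀ i j, i ≠ j → ∀ x ∈ f i, ∀ y ∈ f i, u j x = u j y)
    (hC : ConnectedOn Set.univ (Set.range f)) (c : Fin k → Equiv.Perm V) (π : V ≃ Fin n)
    (g : Fin n → ℕ) :
    (∀ i : ℕ, ∀ h : i + 1 < n,
      g ⟨i, Nat.lt_of_succ_lt h⟩ ≤ g ⟨i + 1, h⟩ ∧
      (i ∈ DesH f c π → g ⟨i, Nat.lt_of_succ_lt h⟩ < g ⟨i + 1, h⟩)) ↔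
    Good c u (fun v => g (π v)) π := by
  let L : Fin n → ℕ ×ₗ Lex (Fin k → Fin n) := fun i => toLex (g i, K c u π (π.symm i))
  have hL : Good c u (fun v => g (π v)) π ↔ ∀ a b, a < b ↔ L a < L b := by
    unfold Good
    constructor
    · intro h a b
      have := h (π.symm a) (π.symm b)
      simpa [L, Prod.Lex.toLex_lt_toLex] using this
    · intro h v w
      have := h (π v) (π w)
      simpa [L, Prod.Lex.toLex_lt_toLex] using this
  have hstep : (∀ i : ℕ, ∀ h : i + 1 < n,
      g ⟨i, Nat.lt_of_succ_lt h⟩ ≤ g ⟨i + 1, h⟩ ∧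
      (i ∈ DesH f c π → g ⟨i, Nat.lt_of_succ_lt h⟩ < g ⟨i + 1, h⟩)) ↔
      ∀ i : ℕ, ∀ h : i + 1 < n, L ⟨i, Nat.lt_of_succ_lt h⟩ < L ⟨i + 1, h⟩ := by
    refine forall_congr' fun i => forall_congr' fun h => ?_
    rw [mem_DesH ha hb hC c π i h]
    have hne : K c u π (π.symm ⟨i, Nat.lt_of_succ_lt h⟩) ≠ K c u π (π.symm ⟨i + 1, h⟩) := by
      intro h'
      have := congrArg Fin.val (π.symm.injective (K_inj ha hb hC c π h'))
      simp at this
    simp only [L, Prod.Lex.toLex_lt_toLex]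
    constructor
    · rintro ⟨h1, h2⟩
      rcases h1.lt_or_eq with h3 | h3
      · exact Or.inl h3
      · refine Or.inr ⟨h3, lt_of_le_of_ne (not_lt.1 fun h4 => ?_) hne⟩
        exact (h2 h4).ne h3
    · rintro (h1 | ⟨h1, h2⟩)
      · exact ⟨h1.le, fun _ => h1⟩
      · exact ⟨h1.le, fun h3 => absurd h3 h2.asymm⟩
  rw [hstep, hL]
  constructor
  · intro h
    have hm : StrictMono L := by
      have : ∀ a b : ℕ, ∀ hab : a < b, ∀ hbn : b < n, L ⟨a, by omega⟩ < L ⟨b, hbn⟩ := by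
        intro a b hab
        induction b, hab using Nat.le_induction with
        | base => intro hbn; exact h a hbn
        | succ b hab ih => intro hbn; exact (ih (by omega)).trans (h b hbn)
      intro a b hab
      exact this a b hab b.2
    exact fun a b => hm.lt_iff_lt.symm
  · intro h i hi
    exact (h _ _).1 (by simp [Fin.lt_def])

/-- Comparison inside an edge. -/
theorem good_edge (ha : ∀ j, ∀ x ∈ f j, u j x = x)
    (hb : ∀ i j, i ≠ j → ∀ x ∈ f i, ∀ y ∈ f i, u j x = u j y)
    {c : Fin k → Equiv.Perm V} {χ : V → ℕ} {π : V ≃ Fin n} (hG : Good c u χ π)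
    {j : Fin k} {x y : V} (hx : x ∈ f j) (hy : y ∈ f j) (hχ : χ x = χ y) :
    π x < π y ↔ π (c j x) < π (c j y) := by
  rw [hG x y]
  simp only [hχ, lt_irrefl, false_or, true_and]
  constructor
  · rintro ⟨i, _, h2⟩
    change π (c i (u i x)) < π (c i (u i y)) at h2
    by_cases hi : j = i
    · subst hi
      rwa [ha _ _ hx, ha _ _ hy] at h2
    · rw [hb j i hi x hx y hy] at h2
      exact absurd h2 (lt_irrefl _)
  · intro h
    refine ⟨j, fun i hi => ?_, ?_⟩
    · change π (c i (u i x)) = π (c i (u i y))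
      rw [hb j i hi.ne' x hx y hy]
    · change π (c j (u j x)) < π (c j (u j y))
      rwa [ha _ _ hx, ha _ _ hy]

variable {c : Fin k → Equiv.Perm V}

theorem c_mem (hc : ∀ i, (c i).IsCycle ∧ ∀ x, c i x ≠ x ↔ x ∈ f i) {j : Fin k} {x : V}
    (hx : x ∈ f j) : c j x ∈ f j := by
  rw [← (hc j).2] at hx ⊢
  exact fun h => hx ((c j).injective h)

theorem pow_mem (hc : ∀ i, (c i).IsCycle ∧ ∀ x, c i x ≠ x ↔ x ∈ f i) {j : Fin k} {x : V}
    (hx : x ∈ f j) (t : ℕ) : (c j ^ t) x ∈ f j := by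
  induction t with
  | zero => simpa
  | succ t ih => rw [pow_succ']; exact c_mem hc ih

theorem good_differ [Finite V] (ha : ∀ j, ∀ x ∈ f j, u j x = x)
    (hb : ∀ i j, i ≠ j → ∀ x ∈ f i, ∀ y ∈ f i, u j x = u j y)
    (hc : ∀ i, (c i).IsCycle ∧ ∀ x, c i x ≠ x ↔ x ∈ f i)
    {χ : V → ℕ} {π : V ≃ Fin n} (hG : Good c u χ π)
    {j : Fin k} {x y : V} (hx : x ∈ f j) (hy : y ∈ f j) (hxy : x ≠ y) :
    ∃ t, χ ((c j ^ t) x) ≠ χ ((c j ^ t) y) := by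
  by_contra hcon
  push Not at hcon
  wlog hlt : π x < π y generalizing x y
  · refine this hy hx hxy.symm (fun t => (hcon t).symm) ?_
    exact lt_of_le_of_ne (not_lt.1 hlt) (fun h => hxy (π.injective h.symm))
  have h1 : ∀ t, π ((c j ^ t) x) < π ((c j ^ t) y) := by
    intro t
    induction t with
    | zero => simpa
    | succ t ih =>
      rw [pow_succ']
      exact (good_edge ha hb hG (pow_mem hc hx t) (pow_mem hc hy t) (hcon t)).1 ih
  obtain ⟨s, hs⟩ := (hc j).1.exists_pow_eq (((hc j).2 x).2 hx) (((hc j).2 y).2 hy)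
  have h2 : ∀ q : ℕ, π x < π ((c j ^ (s * (q + 1))) x) := by
    intro q
    induction q with
    | zero => simpa [hs] using hlt
    | succ q ih =>
      refine ih.trans ?_
      have := h1 (s * (q + 1))
      rwa [← hs, ← Equiv.Perm.mul_apply, ← pow_add, ← Nat.mul_succ] at this
  have h3 := h2 (orderOf (c j) - 1)
  have h4 : orderOf (c j) - 1 + 1 = orderOf (c j) :=
    Nat.sub_add_cancel (orderOf_pos (c j))
  rw [h4, mul_comm, pow_mul, pow_orderOf_eq_one, one_pow] at h3
  exact lt_irrefl _ h3

theorem good_proper [Finite V] (ha : ∀ j, ∀ x ∈ f j, u j x = x)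
    (hb : ∀ i j, i ≠ j → ∀ x ∈ f i, ∀ y ∈ f i, u j x = u j y)
    (hc : ∀ i, (c i).IsCycle ∧ ∀ x, c i x ≠ x ↔ x ∈ f i)
    {χ : V → ℕ} {π : V ≃ Fin n} (hG : Good c u χ π) (hne : ∀ i, (f i).Nonempty)
    (j : Fin k) : ¬ ∃ a, ∀ v ∈ f j, χ v = a := by
  rintro ⟨a, h⟩
  obtain ⟨x, hx⟩ := hne j
  obtain ⟨t, ht⟩ := good_differ ha hb hc hG hx (c_mem hc hx) (((hc j).2 x).2 hx).symm
  exact ht (by rw [h _ (pow_mem hc hx t), h _ (pow_mem hc (c_mem hc hx) t)])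

theorem good_determined (ha : ∀ j, ∀ x ∈ f j, u j x = x)
    (hb : ∀ i j, i ≠ j → ∀ x ∈ f i, ∀ y ∈ f i, u j x = u j y)
    (hc : ∀ i, (c i).IsCycle ∧ ∀ x, c i x ≠ x ↔ x ∈ f i)
    {χ : V → ℕ} {π : V ≃ Fin n} (hG : Good c u χ π) {j : Fin k} (t : ℕ) :
    ∀ {x y : V}, x ∈ f j → y ∈ f j → (∀ s < t, χ ((c j ^ s) x) = χ ((c j ^ s) y)) →
      χ ((c j ^ t) x) ≠ χ ((c j ^ t) y) →
      (π x < π y ↔ χ ((c j ^ t) x) < χ ((c j ^ t) y)) := by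
  induction t with
  | zero =>
    intro x y hx hy _ h
    simp only [pow_zero, Equiv.Perm.one_apply] at h ⊢
    rw [hG x y]
    simp [h]
  | succ t ih =>
    intro x y hx hy hs h
    have h0 : χ x = χ y := by simpa using hs 0 (by omega)
    rw [good_edge ha hb hG hx hy h0]
    have := ih (c_mem hc hx) (c_mem hc hy)
      (fun s hst => by simpa [pow_succ] using hs (s + 1) (by omega))
      (by simpa [pow_succ] using h)
    simpa [pow_succ] using this

theorem good_unique [Finite V] (ha : ∀ j, ∀ x ∈ f j, u j x = x)
    (hb : ∀ i j, i ≠ j → ∀ x ∈ f i, ∀ y ∈ f i, u j x = u j y)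
    (hC : ConnectedOn Set.univ (Set.range f))
    (hc : ∀ i, (c i).IsCycle ∧ ∀ x, c i x ≠ x ↔ x ∈ f i)
    {χ : V → ℕ} {π π' : V ≃ Fin n} (hG : Good c u χ π) (hG' : Good c u χ π') : π = π' := by
  classical
  have hedge : ∀ j, ∀ x ∈ f j, ∀ y ∈ f j, π x < π y → π' x < π' y := by
    intro j x hx y hy hlt
    have hxy : x ≠ y := by rintro rfl; exact lt_irrefl _ hlt
    have hex := good_differ ha hb hc hG hx hy hxy
    have h1 : ∀ s < Nat.find hex, χ ((c j ^ s) x) = χ ((c j ^ s) y) :=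
      fun s hs => not_not.1 (Nat.find_min hex hs)
    have h2 := Nat.find_spec hex
    rw [good_determined ha hb hc hG' _ hx hy h1 h2]
    exact (good_determined ha hb hc hG _ hx hy h1 h2).1 hlt
  have hall : ∀ v w, π v < π w → π' v < π' w := by
    intro v w h
    rcases (hG v w).1 h with h1 | ⟨h1, j, h2, h3⟩
    · exact (hG' v w).2 (Or.inl h1)
    · refine (hG' v w).2 (Or.inr ⟨h1, j, fun i hi => ?_, ?_⟩)
      · have := (c i).injective (π.injective (h2 i hi))
        change π' (c i (u i v)) = π' (c i (u i w))
        rw [this]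
      · change π (c j (u j v)) < π (c j (u j w)) at h3
        change π' (c j (u j v)) < π' (c j (u j w))
        have hne : u j v ≠ u j w := by
          intro h'
          rw [h'] at h3
          exact lt_irrefl _ h3
        obtain ⟨m1, m2⟩ := gate_mem ha hb hC hne
        exact hedge j _ (c_mem hc m1) _ (c_mem hc m2) h3
  have hm : StrictMono (fun i => π' (π.symm i)) := fun a b hab => hall _ _ (by simpa using hab)
  have hid : (fun i => π' (π.symm i)) = id := by
    have e : (hm.orderIsoOfSurjective _ (π'.surjective.comp π.symm.surjective)) =
      OrderIso.refl (Fin n) := Subsingleton.elim _ _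
    funext i
    exact congrArg (fun z : Fin n ≃o Fin n => z i) e
  ext v
  have := congrFun hid (π v)
  simp at this
  rw [this]

theorem primitive [Finite V]
    (hc : ∀ i, (c i).IsCycle ∧ ∀ x, c i x ≠ x ↔ x ∈ f i)
    (hp : ∀ i, ((f i).ncard).Prime) {χ : V → ℕ} {j : Fin k}
    (hχ : ¬ ∃ a, ∀ v ∈ f j, χ v = a) {x y : V} (hx : x ∈ f j) (hy : y ∈ f j)
    (h : ∀ t, χ ((c j ^ t) x) = χ ((c j ^ t) y)) : x = y := by
  classical
  haveI := Fintype.ofFinite V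
  by_contra hxy
  obtain ⟨s, hs⟩ := (hc j).1.exists_pow_eq (((hc j).2 x).2 hx) (((hc j).2 y).2 hy)
  have hord : orderOf (c j) = (f j).ncard := by
    rw [(hc j).1.orderOf, ← Set.ncard_coe_finset]
    congr 1
    ext z
    simp [← (hc j).2]
  have hcop : s.Coprime (orderOf (c j)) := by
    rw [hord, Nat.coprime_comm, (hp j).coprime_iff_not_dvd, ← hord]
    intro hd
    rw [orderOf_dvd_iff_pow_eq_one.1 hd] at hs
    exact hxy hs
  obtain ⟨m, hm⟩ := exists_pow_eq_self_of_coprime hcop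
  have h1 : ∀ z ∈ f j, χ ((c j ^ s) z) = χ z := by
    intro z hz
    obtain ⟨t, rfl⟩ := (hc j).1.exists_pow_eq (((hc j).2 x).2 hx) (((hc j).2 z).2 hz)
    rw [h t, ← hs, ← Equiv.Perm.mul_apply, ← Equiv.Perm.mul_apply, ← pow_add, ← pow_add, add_comm]
  have h2 : ∀ q : ℕ, ∀ z ∈ f j, χ (((c j ^ s) ^ q) z) = χ z := by
    intro q z hz
    induction q with
    | zero => simp
    | succ q ih =>
      rw [pow_succ', Equiv.Perm.mul_apply, h1 _ (by rw [← pow_mul]; exact pow_mem hc hz _), ih]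
  have h3 : ∀ z ∈ f j, χ (c j z) = χ z := by
    intro z hz
    have := h2 m z hz
    rwa [hm] at this
  refine hχ ⟨χ x, fun z hz => ?_⟩
  obtain ⟨t, rfl⟩ := (hc j).1.exists_pow_eq (((hc j).2 x).2 hx) (((hc j).2 z).2 hz)
  clear hz
  induction t with
  | zero => simp
  | succ t ih => rw [pow_succ', Equiv.Perm.mul_apply, h3 _ (pow_mem hc hx t), ih]

/-- color word read along the cycle `c j` from `x` -/
def word (c : Fin k → Equiv.Perm V) (χ : V → ℕ) (j : Fin k) (x : V) : Lex (ℕ → ℕ) :=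
  toLex (fun t => χ ((c j ^ t) x))

theorem word_lt (χ : V → ℕ) (j : Fin k) (x y : V) :
    word c χ j x < word c χ j y ↔
      χ x < χ y ∨ χ x = χ y ∧ word c χ j (c j x) < word c χ j (c j y) := by
  constructor
  · rintro ⟨t, h1, h2⟩
    change χ ((c j ^ t) x) < χ ((c j ^ t) y) at h2
    replace h1 : ∀ s < t, χ ((c j ^ s) x) = χ ((c j ^ s) y) := h1
    cases t with
    | zero => left; simpa using h2
    | succ t =>
      refine Or.inr ⟨by simpa using h1 0 (by omega), t, fun s hs => ?_, ?_⟩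
      · change χ ((c j ^ s) (c j x)) = χ ((c j ^ s) (c j y))
        simpa [pow_succ] using h1 (s + 1) (by omega)
      · change χ ((c j ^ t) (c j x)) < χ ((c j ^ t) (c j y))
        simpa [pow_succ] using h2
  · rintro (h | ⟨h, t, h1, h2⟩)
    · exact ⟨0, fun s hs => absurd hs (by simp), h⟩
    · change χ ((c j ^ t) (c j x)) < χ ((c j ^ t) (c j y)) at h2
      replace h1 : ∀ s < t, χ ((c j ^ s) (c j x)) = χ ((c j ^ s) (c j y)) := h1
      refine ⟨t + 1, fun s hs => ?_, ?_⟩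
      · change χ ((c j ^ s) x) = χ ((c j ^ s) y)
        cases s with
        | zero => simpa using h
        | succ s => simpa [pow_succ] using h1 s (by omega)
      · change χ ((c j ^ (t + 1)) x) < χ ((c j ^ (t + 1)) y)
        simpa [pow_succ] using h2

theorem good_exists [Fintype V] (ha : ∀ j, ∀ x ∈ f j, u j x = x)
    (hb : ∀ i j, i ≠ j → ∀ x ∈ f i, ∀ y ∈ f i, u j x = u j y)
    (hC : ConnectedOn Set.univ (Set.range f))
    (hc : ∀ i, (c i).IsCycle ∧ ∀ x, c i x ≠ x ↔ x ∈ f i)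
    (hp : ∀ i, ((f i).ncard).Prime) (hn : Fintype.card V = n) {χ : V → ℕ}
    (hχ : ∀ j, ¬ ∃ a, ∀ v ∈ f j, χ v = a) : ∃ π : V ≃ Fin n, Good c u χ π := by
  have hword : ∀ j, ∀ x ∈ f j, ∀ y ∈ f j, word c χ j x = word c χ j y → x = y := by
    intro j x hx y hy h
    exact primitive hc hp (hχ j) hx hy (fun t => congrFun (toLex.injective h) t)
  let W : V → Lex (Fin k → Lex (ℕ → ℕ)) := fun v => toLex (fun j => word c χ j (c j (u j v)))
  let key : V → ℕ ×ₗ Lex (Fin k → Lex (ℕ → ℕ)) := fun v => toLex (χ v, W v)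
  have hWeq : ∀ j v w, word c χ j (c j (u j v)) = word c χ j (c j (u j w)) → u j v = u j w := by
    intro j v w h
    by_contra hne
    obtain ⟨m1, m2⟩ := gate_mem ha hb hC hne
    exact hne ((c j).injective (hword j _ (c_mem hc m1) _ (c_mem hc m2) h))
  have hkey : Function.Injective key := by
    intro v w h
    by_contra hvw
    obtain ⟨j, hj⟩ := exists_sep ha hb hC hvw
    have h1 : W v = W w := congrArg Prod.snd (toLex.injective h)
    exact hj (hWeq j v w (congrFun (toLex.injective h1) j))
  letI : LinearOrder V := LinearOrder.lift' key hkey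
  let e := Fintype.orderIsoFinOfCardEq V hn
  let π : V ≃ Fin n := e.symm.toEquiv
  have hπ : ∀ v w, π v < π w ↔ χ v < χ w ∨ χ v = χ w ∧ W v < W w := by
    intro v w
    have h1 : π v < π w ↔ v < w := e.symm.lt_iff_lt
    have h2 : v < w ↔ key v < key w := Iff.rfl
    rw [h1, h2, Prod.Lex.toLex_lt_toLex]
  have hedge : ∀ j, ∀ x ∈ f j, ∀ y ∈ f j, (π x < π y ↔ word c χ j x < word c χ j y) := by
    intro j x hx y hy
    rw [hπ, word_lt]
    refine or_congr Iff.rfl (and_congr Iff.rfl ?_)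
    constructor
    · rintro ⟨i, _, h2⟩
      change word c χ i (c i (u i x)) < word c χ i (c i (u i y)) at h2
      by_cases hi : j = i
      · subst hi
        rwa [ha _ _ hx, ha _ _ hy] at h2
      · rw [hb j i hi x hx y hy] at h2
        exact absurd h2 (lt_irrefl _)
    · intro h
      refine ⟨j, fun i hi => ?_, ?_⟩
      · change word c χ i (c i (u i x)) = word c χ i (c i (u i y))
        rw [hb j i hi.ne' x hx y hy]
      · change word c χ j (c j (u j x)) < word c χ j (c j (u j y))
        rwa [ha _ _ hx, ha _ _ hy]
  refine ⟨π, fun v w => ?_⟩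
  rw [hπ]
  refine or_congr Iff.rfl (and_congr Iff.rfl ?_)
  have hlt : ∀ j, (word c χ j (c j (u j v)) < word c χ j (c j (u j w)) ↔
      π (c j (u j v)) < π (c j (u j w))) := by
    intro j
    by_cases hne : u j v = u j w
    · rw [hne]; exact iff_of_false (lt_irrefl _) (lt_irrefl _)
    · obtain ⟨m1, m2⟩ := gate_mem ha hb hC hne
      exact (hedge j _ (c_mem hc m1) _ (c_mem hc m2)).symm
  constructor
  · rintro ⟨j, h1, h2⟩
    refine ⟨j, fun i hi => ?_, (hlt j).1 h2⟩
    change π (c i (u i v)) = π (c i (u i w))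
    rw [hWeq i v w (h1 i hi)]
  · rintro ⟨j, h1, h2⟩
    refine ⟨j, fun i hi => ?_, (hlt j).2 h2⟩
    change word c χ i (c i (u i v)) = word c χ i (c i (u i w))
    rw [(c i).injective (π.injective (h1 i hi))]

end

theorem finite_content (n : ℕ) (d : ℕ →₀ ℕ) (P : (Fin n → ℕ) → Prop) :
    Finite {g : Fin n → ℕ // P g ∧ ∀ j : ℕ, d j = Nat.card {t : Fin n // g t = j}} := by
  have hmem : ∀ g : {g : Fin n → ℕ // P g ∧ ∀ j : ℕ, d j = Nat.card {t : Fin n // g t = j}},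
      ∀ t, g.1 t ∈ d.support := by
    intro g t
    rw [Finsupp.mem_support_iff, g.2.2 (g.1 t)]
    haveI : Nonempty {s : Fin n // g.1 s = g.1 t} := ⟨⟨t, rfl⟩⟩
    exact Nat.card_pos.ne'
  refine Finite.of_injective (β := Fin n → d.support) (fun g t => ⟨g.1 t, hmem g t⟩) ?_
  intro g g' h
  apply Subtype.ext
  funext t
  exact congrArg Subtype.val (congrFun h t)

end HT

/-- **Main theorem.** Let `H` be a hypertree with every edge of prime
size, with a fixed edge enumeration `f 0, …, f (k-1)` satisfying
`|(f 0 ∪ ⋯ ∪ f i) ∩ f (i+1)| = 1` and fixed cyclic permutations `c i` of each edge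
`f i`. Then `X_H = Σ_{π} F_{Des_H(π)}`, the sum over all labelings `π : V ≃ Fin n`. -/
theorem chromSym_hypertree_eq_sum_DesH {V : Type} [Fintype V] [DecidableEq V]
    (n : ℕ) (hn : Fintype.card V = n)
    (k : ℕ) (f : Fin k → Set V) (hinj : Function.Injective f)
    (hT : IsHypertreeOn Set.univ (Set.range f))
    (hp : ∀ i, ((f i).ncard).Prime)
    (hord : ∀ i : ℕ, ∀ hi : i + 1 < k,
      ((⋃ j ∈ {j : Fin k | (j : ℕ) ≤ i}, f j) ∩ f ⟨i + 1, hi⟩).ncard = 1)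
    (c : Fin k → Equiv.Perm V)
    (hc : ∀ i, (c i).IsCycle ∧ ∀ x, c i x ≠ x ↔ x ∈ f i) :
    chromSym (Set.range f) = ∑ π : V ≃ Fin n, funF n (DesH f c π) := by
  have hne : ∀ i, (f i).Nonempty := fun i =>
    Set.nonempty_of_ncard_ne_zero (hp i).ne_zero
  have hC := hT.2.1
  choose u ha hb' using HT.exists_gate k f hne hord
  have hb : ∀ i j, i ≠ j → ∀ x ∈ f i, ∀ y ∈ f i, u j x = u j y := fun i j => hb' j i
  have hcont : ∀ (π : V ≃ Fin n) (g : Fin n → ℕ) (j : ℕ),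
      Nat.card {v : V // g (π v) = j} = Nat.card {t : Fin n // g t = j} := fun π g j =>
    Nat.card_congr (π.subtypeEquiv (fun v => Iff.rfl))
  funext d
  have hsum : (∑ π : V ≃ Fin n, funF n (DesH f c π)) d =
      ∑ π : V ≃ Fin n, funF n (DesH f c π) d := Finset.sum_apply _ _ _
  rw [hsum]
  unfold chromSym funF
  rw [← Nat.cast_sum]
  congr 1
  haveI := fun π : V ≃ Fin n => HT.finite_content n d (fun g => ∀ i : ℕ, ∀ h : i + 1 < n,
      g ⟨i, Nat.lt_of_succ_lt h⟩ ≤ g ⟨i + 1, h⟩ ∧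
      (i ∈ DesH f c π → g ⟨i, Nat.lt_of_succ_lt h⟩ < g ⟨i + 1, h⟩))
  rw [← Nat.card_sigma]
  symm
  refine Nat.card_congr (Equiv.ofBijective (fun a => ⟨fun v => a.2.1 (a.1 v), ?_, ?_⟩) ⟨?_, ?_⟩)
  · rintro _ ⟨j, rfl⟩
    exact HT.good_proper ha hb hc ((HT.good_iff ha hb hC c a.1 a.2.1).1 a.2.2.1) hne j
  · intro j
    rw [a.2.2.2 j]
    exact (hcont a.1 a.2.1 j).symm
  · rintro ⟨π, g, hg⟩ ⟨π', g', hg'⟩ h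
    have h1 : (fun v => g (π v)) = fun v => g' (π' v) := congrArg Subtype.val h
    have hG := (HT.good_iff ha hb hC c π g).1 hg.1
    have hG' := (HT.good_iff ha hb hC c π' g').1 hg'.1
    rw [← h1] at hG'
    obtain rfl := HT.good_unique ha hb hC hc hG hG'
    have : g = g' := by
      funext t
      simpa using congrFun h1 (π.symm t)
    subst this
    rfl
  · rintro ⟨χ, h1, h2⟩
    obtain ⟨π, hG⟩ := HT.good_exists ha hb hC hc hp hn (fun j => h1 _ ⟨j, rfl⟩)
    have hχ : (fun v => (fun t => χ (π.symm t)) (π v)) = χ := by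
      funext v; simp
    refine ⟨⟨π, fun t => χ (π.symm t), ?_, ?_⟩, ?_⟩
    · refine (HT.good_iff ha hb hC c π (fun t => χ (π.symm t))).2 ?_
      rw [hχ]
      exact hG
    · intro j
      rw [← hcont π, h2 j]
      simp
    · apply Subtype.ext
      exact hχ
end
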